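/- Let e ≥ 2, r = 3, with D^u as above for a fixed u ∈ {1,…,6}. Then the cardinality of D^u is (y+2)(z+2) − 1, and the number of matrices M ∈ D^u such that Pt(0,M) is Kleshchev equals (y+1)(z+1). -/

import Mathlib

open scoped Classical

namespace AK
noncomputable section



/-! ### Matrices, order from base tuple, abacus β-sets -/

/-- The order ≺ on columns determined by a base tuple `B`. -/
def prec {e : ℕ} (B : Fin e → ℕ) (i j : Fin e) : Prop :=
  B i < B j ∨ (B i = B j ∧ i < j)

/-- `rank B i = π(B)⁻¹(i)`, the number of columns ≺-smaller than `i`. -/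
def rank {e : ℕ} (B : Fin e → ℕ) (i : Fin e) : Fin e :=
  ⟨(Finset.univ.filter (fun j => prec B j i)).card, by
    have h1 : (Finset.univ.filter (fun j => prec B j i)) ⊆ Finset.univ.erase i := by
      intro j hj
      rw [Finset.mem_filter] at hj
      refine Finset.mem_erase.mpr ⟨?_, Finset.mem_univ j⟩
      rintro rfl
      rcases hj.2 with h | ⟨-, h⟩ <;> exact lt_irrefl _ h
    have h2 := Finset.card_le_card h1
    have h3 : (Finset.univ.erase i).card < Finset.univ.card :=
      Finset.card_erase_lt_of_mem (Finset.mem_univ i)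
    simpa using lt_of_le_of_lt h2 h3⟩

/-- The number of beads on runner `i` of the abacus of component `s` of `Pt(B,M)`. -/
def beads {e r : ℕ} (B : Fin e → ℕ) (M : Fin r → Fin e → Bool) (s : Fin r) (i : Fin e) : ℕ :=
  B i + (if M s (rank B i) then 1 else 0)

/-- The canonical β-set of component `s` of `Pt(B,M)`. -/
def Tset {e r : ℕ} (B : Fin e → ℕ) (M : Fin r → Fin e → Bool) (s : Fin r) : Set ℤ :=
  {z | z < 0 ∨ (0 ≤ z ∧ ∃ h : z.toNat % e < e, z.toNat / e < beads B M s ⟨z.toNat % e, h⟩)}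

/-- `n_s`, the total number of beads of component `s`. -/
def nsum {e r : ℕ} (B : Fin e → ℕ) (M : Fin r → Fin e → Bool) (s : Fin r) : ℕ :=
  ∑ i : Fin e, beads B M s i

/-- Decreasing enumeration of a set of integers: `tEnum T x` is `t_{x+1}`. -/
noncomputable def tEnum (T : Set ℤ) : ℕ → ℤ
  | 0 => sSup T
  | (x + 1) => sSup (T ∩ Set.Iio (tEnum T x))

/-- The multipartition `Pt(B,M)`: component `s`, part `p+1` (0-indexed parts). -/
noncomputable def PtPart {e r : ℕ} (B : Fin e → ℕ) (M : Fin r → Fin e → Bool)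
    (s : Fin r) (p : ℕ) : ℕ :=
  (tEnum (Tset B M s) p + (p + 1) - (nsum B M s : ℤ)).toNat

/-- The multicharge of `Pt(B,M)`. -/
noncomputable def PtCharge {e r : ℕ} (B : Fin e → ℕ) (M : Fin r → Fin e → Bool)
    (s : Fin r) : ZMod e :=
  (nsum B M s : ZMod e)

/-! ### Nodes, good nodes and Kleshchev multipartitions -/

/-- A node `(s, x, y)` (all 0-indexed). -/
abbrev Node (r : ℕ) := Fin r × ℕ × ℕ

/-- `A` is above `B`. -/
def NodeAbove {r : ℕ} (A B : Node r) : Prop :=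
  A.1 < B.1 ∨ (A.1 = B.1 ∧ A.2.1 < B.2.1)

/-- The residue of a node. -/
def res {e r : ℕ} (a : Fin r → ZMod e) (A : Node r) : ZMod e :=
  a A.1 - (A.2.1 : ZMod e) + (A.2.2 : ZMod e)

/-- `A` is a removable node of `lam`. -/
def Removable {r : ℕ} (lam : Fin r → ℕ → ℕ) (A : Node r) : Prop :=
  A.2.2 + 1 = lam A.1 A.2.1 ∧ lam A.1 (A.2.1 + 1) < lam A.1 A.2.1

/-- `A` is an addable node of `lam`. -/
def Addable {r : ℕ} (lam : Fin r → ℕ → ℕ) (A : Node r) : Prop :=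
  A.2.2 = lam A.1 A.2.1 ∧ (A.2.1 = 0 ∨ lam A.1 A.2.1 < lam A.1 (A.2.1 - 1))

/-- `A` is a normal node of `lam`. -/
def Normal {e r : ℕ} (a : Fin r → ZMod e) (lam : Fin r → ℕ → ℕ) (A : Node r) : Prop :=
  Removable lam A ∧
    ∀ B : Node r, Addable lam B → res a B = res a A → NodeAbove A B →
      Set.ncard {C : Node r | Addable lam C ∧ res a C = res a A ∧ NodeAbove A C ∧ NodeAbove C B}
        < Set.ncard {C : Node r | Removable lam C ∧ res a C = res a A ∧ NodeAbove A C ∧ NodeAbove C B}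

/-- `A` is a good node of `lam`: normal, and highest among normal nodes of its residue. -/
def Good {e r : ℕ} (a : Fin r → ZMod e) (lam : Fin r → ℕ → ℕ) (A : Node r) : Prop :=
  Normal a lam A ∧ ∀ B : Node r, Normal a lam B → res a B = res a A → B ≠ A → NodeAbove A B

/-- Remove the node `A` from `lam`. -/
def removeNode {r : ℕ} (lam : Fin r → ℕ → ℕ) (A : Node r) : Fin r → ℕ → ℕ :=
  fun s x => if s = A.1 ∧ x = A.2.1 then lam s x - 1 else lam s x

/-- Kleshchev multipartitions (for the multicharge `a`). -/
inductive IsKleshchev {e r : ℕ} (a : Fin r → ZMod e) : (Fin r → ℕ → ℕ) → Prop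
  | empty : IsKleshchev a (fun _ _ => 0)
  | step (lam : Fin r → ℕ → ℕ) (A : Node r) (hA : Good a lam A)
      (h : IsKleshchev a (removeNode lam A)) : IsKleshchev a lam

/-! ### Weights and bead swaps -/

/-- `δ₊^M(t,s)`. -/
def deltaP {e r : ℕ} (M : Fin r → Fin e → Bool) (t s : Fin r) : ℕ :=
  (Finset.univ.filter (fun i => M t i = true ∧ M s i = false)).card

/-- `wt^M(t,s)`. -/
def wtPair {e r : ℕ} (M : Fin r → Fin e → Bool) (t s : Fin r) : ℕ :=
  min (deltaP M t s) (deltaP M s t)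

/-- `wt(M)`. -/
def wtM {e r : ℕ} (M : Fin r → Fin e → Bool) : ℕ :=
  ∑ t : Fin r, ∑ s ∈ Finset.univ.filter (· < t), wtPair M t s

/-- `M'` is obtained from `M` by a bead swap. -/
def BeadSwap {e r : ℕ} (M M' : Fin r → Fin e → Bool) : Prop :=
  ∃ i j : Fin e, i ≠ j ∧ ∃ s t : Fin r, s ≠ t ∧
    M s i = true ∧ M t j = true ∧ M s j = false ∧ M t i = false ∧
    M' s i = false ∧ M' t j = false ∧ M' s j = true ∧ M' t i = true ∧
    (∀ s' i', (s' ≠ s ∧ s' ≠ t) ∨ (i' ≠ i ∧ i' ≠ j) → M' s' i' = M s' i')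




/-! ### The families `α^u_k`, `β^u_l`, `γ^u_{kl}` for `r = 3` -/

def xcol : Fin 6 → Fin 3 → Bool := fun _ => ![false, false, false]

def ycol : Fin 6 → Fin 3 → Bool :=
  ![![false,true,true], ![true,false,false], ![true,true,false],
    ![false,false,true], ![false,true,true], ![true,false,false]]

def zcol : Fin 6 → Fin 3 → Bool :=
  ![![false,false,true], ![true,false,true], ![false,true,false],
    ![true,false,true], ![false,true,false], ![true,true,false]]

def oycol : Fin 6 → Fin 3 → Bool :=
  ![![true,false,true], ![false,false,true], ![false,true,true],
    ![true,false,false], ![true,true,false], ![false,true,false]]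

def ozcol : Fin 6 → Fin 3 → Bool :=
  ![![false,true,false], ![true,true,false], ![true,false,false],
    ![false,true,true], ![false,false,true], ![true,false,true]]

def aacol : Fin 6 → Fin 3 → Bool :=
  ![![true,true,false], ![false,true,false], ![true,false,true],
    ![false,true,false], ![true,false,true], ![false,false,true]]

def abcol : Fin 6 → Fin 3 → Bool :=
  ![![true,false,false], ![false,true,true], ![false,false,true],
    ![true,true,false], ![true,false,false], ![false,true,true]]

variable {e : ℕ}

/-- The matrix `α^u_k`. -/
def alphaM (Y Z : Finset (Fin e)) {y : ℕ} (hY : Y.card = y + 1) (u : Fin 6)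
    (k : Fin (y + 1)) : Fin 3 → Fin e → Bool :=
  fun s c =>
    if c = Y.orderEmbOfFin hY k then aacol u s
    else if c ∈ Y then ycol u s
    else if c ∈ Z then zcol u s
    else false

/-- The matrix `β^u_l`. -/
def betaM (Y Z : Finset (Fin e)) {z : ℕ} (hZ : Z.card = z + 1) (u : Fin 6)
    (l : Fin (z + 1)) : Fin 3 → Fin e → Bool :=
  fun s c =>
    if c = Z.orderEmbOfFin hZ l then abcol u s
    else if c ∈ Z then zcol u s
    else if c ∈ Y then ycol u s
    else false

/-- The matrix `γ^u_{kl}`. -/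
def gammaM (Y Z : Finset (Fin e)) {y z : ℕ} (hY : Y.card = y + 1) (hZ : Z.card = z + 1)
    (u : Fin 6) (k : Fin (y + 1)) (l : Fin (z + 1)) : Fin 3 → Fin e → Bool :=
  fun s c =>
    if c = Y.orderEmbOfFin hY k then oycol u s
    else if c = Z.orderEmbOfFin hZ l then ozcol u s
    else if c ∈ Y then ycol u s
    else if c ∈ Z then zcol u s
    else false

/-- The set `D^u` of matrices in the block. -/
def Duset (Y Z : Finset (Fin e)) {y z : ℕ} (hY : Y.card = y + 1) (hZ : Z.card = z + 1)
    (u : Fin 6) : Set (Fin 3 → Fin e → Bool) :=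
  {A | (∃ k, A = alphaM Y Z hY u k) ∨ (∃ l, A = betaM Y Z hZ u l) ∨
       (∃ k l, A = gammaM Y Z hY hZ u k l)}


section

def Rm (i : ℕ) (P : Finset ℕ) : Prop := i + 1 ∈ P ∧ i ∉ P
def Ad (i : ℕ) (P : Finset ℕ) : Prop := i ∈ P ∧ i + 1 ∉ P
def mv (i : ℕ) (P : Finset ℕ) : Finset ℕ := insert i (P.erase (i + 1))

theorem mem_mv (i x : ℕ) (P : Finset ℕ) : x ∈ mv i P ↔ x = i ∨ (x ≠ i + 1 ∧ x ∈ P) := by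
  simp [mv]

/-- Three-row Kleshchev configurations, in terms of bead positions. -/
inductive KK : Finset ℕ → Finset ℕ → Finset ℕ → Prop
  | base (P Q R : Finset ℕ) (hP : ∀ i, ¬ Rm i P) (hQ : ∀ i, ¬ Rm i Q) (hR : ∀ i, ¬ Rm i R) :
      KK P Q R
  | s0 (i : ℕ) (P Q R : Finset ℕ) (h0 : Rm i P) (h1 : ¬ Ad i Q) (h2 : Ad i R → Rm i Q)
      (h : KK (mv i P) Q R) : KK P Q R
  | s1 (i : ℕ) (P Q R : Finset ℕ) (h0 : Rm i Q) (h1 : ¬ Ad i R) (h2 : ¬ Rm i P)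
      (h : KK P (mv i Q) R) : KK P Q R
  | s2 (i : ℕ) (P Q R : Finset ℕ) (h0 : Rm i R) (h1 : ¬ Rm i Q) (h2 : Rm i P → Ad i Q)
      (h : KK P Q (mv i R)) : KK P Q R

/-- The number of elements below `c`. -/
def L (P : Finset ℕ) (c : ℕ) : ℕ := (P.filter (fun x => x < c)).card

theorem L_zero (P : Finset ℕ) : L P 0 = 0 := by simp [L]

theorem L_succ (P : Finset ℕ) (c : ℕ) : L P (c + 1) = L P c + if c ∈ P then 1 else 0 := by
  unfold L
  split_ifs with h
  · have : P.filter (fun x => x < c + 1) = insert c (P.filter (fun x => x < c)) := by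
      ext x; simp only [Finset.mem_filter, Finset.mem_insert]
      constructor
      · rintro ⟨h1, h2⟩; rcases Nat.lt_succ_iff_lt_or_eq.1 h2 with h3 | h3
        · exact Or.inr ⟨h1, h3⟩
        · exact Or.inl h3
      · rintro (rfl | ⟨h1, h2⟩)
        · exact ⟨h, by omega⟩
        · exact ⟨h1, by omega⟩
    rw [this, Finset.card_insert_of_notMem (by simp)]
  · congr 1
    ext x; simp only [Finset.mem_filter]
    constructor
    · rintro ⟨h1, h2⟩
      refine ⟨h1, ?_⟩
      rcases Nat.lt_succ_iff_lt_or_eq.1 h2 with h3 | h3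
      · exact h3
      · subst h3; exact absurd h1 h
    · rintro ⟨h1, h2⟩; exact ⟨h1, by omega⟩

theorem L_le_card (P : Finset ℕ) (c : ℕ) : L P c ≤ P.card := Finset.card_filter_le _ _

theorem L_le (P : Finset ℕ) (c : ℕ) : L P c ≤ c := by
  induction c with
  | zero => simp [L_zero]
  | succ c ih => rw [L_succ]; split_ifs <;> omega

theorem L_lt_card (P : Finset ℕ) (c x : ℕ) (hx : x ∈ P) (hc : c ≤ x) : L P c + 1 ≤ P.card := by
  apply Finset.card_lt_card
  refine ⟨Finset.filter_subset _ _, fun h => ?_⟩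
  have := h hx
  simp at this; omega

theorem card_mv (i : ℕ) (P : Finset ℕ) (h : Rm i P) : (mv i P).card = P.card := by
  unfold mv
  rw [Finset.card_insert_of_notMem, Finset.card_erase_of_mem h.1]
  · have := Finset.card_pos.2 ⟨_, h.1⟩; omega
  · simp [h.2]

theorem sum_mv (i : ℕ) (P : Finset ℕ) (h : Rm i P) :
    (∑ x ∈ mv i P, x) + 1 = ∑ x ∈ P, x := by
  unfold mv
  rw [Finset.sum_insert (by simp [h.2])]
  have := Finset.add_sum_erase P (fun x => x) h.1
  omega

theorem L_mv (i : ℕ) (P : Finset ℕ) (h : Rm i P) (c : ℕ) :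
    L (mv i P) c = L P c + if c = i + 1 then 1 else 0 := by
  induction c with
  | zero => simp [L_zero]
  | succ c ih =>
    rw [L_succ, L_succ, ih]
    obtain ⟨h1, h2⟩ := h
    by_cases hc : c = i
    · subst hc; simp [mem_mv, h2]
    · by_cases hc' : c = i + 1
      · subst hc'; simp [mem_mv, h1]
      · simp [mem_mv, hc, hc']

/-- Two-row dominance condition. -/
def Pr (d : ℕ) (P Q : Finset ℕ) : Prop := ∀ c, L Q c ≤ d + L P c

theorem Pr_mvP (d i : ℕ) (P Q : Finset ℕ) (h : Rm i P) (h' : ¬ Ad i Q) :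
    Pr d (mv i P) Q ↔ Pr d P Q := by
  constructor
  · intro H c
    have hc := H c
    rw [L_mv i P h] at hc
    by_cases e : c = i + 1
    · subst e
      have h0 := H i
      have h2 := H (i + 1 + 1)
      have a1 := L_succ P i
      have a2 := L_succ P (i + 1)
      have b1 := L_succ Q i
      have b2 := L_succ Q (i + 1)
      rw [L_mv i P h] at h0 h2
      simp only [h.1, h.2, if_true, if_false] at a1 a2
      simp at h0 h2 hc
      unfold Ad at h'
      by_cases q1 : i ∈ Q <;> by_cases q2 : i + 1 ∈ Q <;> simp [q1, q2] at b1 b2 h' <;> omega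
    · simpa [e] using hc
  · intro H c
    rw [L_mv i P h]
    have := H c
    omega

theorem Pr_mvQ (d i : ℕ) (P Q : Finset ℕ) (h : Rm i Q) (h' : ¬ Rm i P) :
    Pr d P (mv i Q) ↔ Pr d P Q := by
  constructor
  · intro H c
    have := H c
    rw [L_mv i Q h] at this
    omega
  · intro H c
    have hc := H c
    rw [L_mv i Q h]
    by_cases e : c = i + 1
    · subst e
      have h0 := H i
      have h2 := H (i + 1 + 1)
      have a1 := L_succ P i
      have a2 := L_succ P (i + 1)
      have b1 := L_succ Q i
      have b2 := L_succ Q (i + 1)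
      simp only [h.1, h.2, if_true, if_false] at b1 b2
      simp
      unfold Rm at h'
      by_cases q1 : i ∈ P <;> by_cases q2 : i + 1 ∈ P <;> simp [q1, q2] at a1 a2 h' <;> omega
    · simpa [e] using hc

theorem LJ_down (P : Finset ℕ) (h : ∀ i, ¬ Rm i P) (x y : ℕ) (hx : x ∈ P) (hy : y ≤ x) : y ∈ P := by
  induction x with
  | zero => have : y = 0 := by omega
            subst this; exact hx
  | succ x ih =>
    by_cases e : y = x + 1
    · subst e; exact hx
    · apply ih _ (by omega)
      by_contra hc
      exact h x ⟨hx, hc⟩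

theorem LJ_mem (P : Finset ℕ) (h : ∀ i, ¬ Rm i P) (x : ℕ) : x ∈ P ↔ x < P.card := by
  have hsub : ∀ x ∈ P, Finset.range (x + 1) ⊆ P := by
    intro x hx y hy
    exact LJ_down P h x y hx (by simpa [Nat.lt_succ_iff] using hy)
  constructor
  · intro hx
    have := Finset.card_le_card (hsub x hx)
    simp at this; omega
  · intro hx
    by_contra hc
    have : P ⊆ Finset.range x := by
      intro y hy
      rw [Finset.mem_range]
      by_contra hxy
      exact hc (LJ_down P h y x hy (by omega))
    have := Finset.card_le_card this
    simp at this; omega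

theorem LJ_eq (P : Finset ℕ) (h : ∀ i, ¬ Rm i P) : P = Finset.range P.card := by
  ext x; rw [LJ_mem P h, Finset.mem_range]

theorem LJ_L (P : Finset ℕ) (h : ∀ i, ¬ Rm i P) (c : ℕ) : L P c = min c P.card := by
  induction c with
  | zero => simp [L_zero]
  | succ c ih =>
    rw [L_succ, ih]
    have := LJ_mem P h c
    by_cases hc : c ∈ P
    · have := this.1 hc
      simp [hc]; omega
    · have := mt this.2 hc
      simp [hc]; omega

theorem KK_Pr12 {P Q R : Finset ℕ} (h : KK P Q R) :
    ∀ d, Q.card ≤ d + P.card → Pr d P Q := by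
  induction h with
  | base P Q R hP hQ hR =>
    intro d hd c
    rw [LJ_L P hP, LJ_L Q hQ]; omega
  | s0 i P Q R h0 h1 h2 h ih =>
    intro d hd
    rw [← Pr_mvP d i P Q h0 h1]
    exact ih d (by rw [card_mv i P h0]; exact hd)
  | s1 i P Q R h0 h1 h2 h ih =>
    intro d hd
    rw [← Pr_mvQ d i P Q h0 h2]
    exact ih d (by rw [card_mv i Q h0]; exact hd)
  | s2 i P Q R h0 h1 h2 h ih => exact ih

theorem KK_Pr23 {P Q R : Finset ℕ} (h : KK P Q R) :
    ∀ d, R.card ≤ d + Q.card → Pr d Q R := by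
  induction h with
  | base P Q R hP hQ hR =>
    intro d hd c
    rw [LJ_L R hR, LJ_L Q hQ]; omega
  | s0 i P Q R h0 h1 h2 h ih => exact ih
  | s1 i P Q R h0 h1 h2 h ih =>
    intro d hd
    rw [← Pr_mvP d i Q R h0 h1]
    exact ih d (by rw [card_mv i Q h0]; exact hd)
  | s2 i P Q R h0 h1 h2 h ih =>
    intro d hd
    rw [← Pr_mvQ d i Q R h0 h1]
    exact ih d (by rw [card_mv i R h0]; exact hd)

theorem noAd (d i : ℕ) (Q R : Finset ℕ) (hR : ∀ i, ¬ Rm i R) (hp : Pr d Q R)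
    (hd : R.card = d + Q.card ∨ d = 0) (hQ : Rm i Q) : ¬ Ad i R := by
  rintro ⟨h1, h2⟩
  rw [LJ_mem R hR] at h1 h2
  have h3 := hp (i + 1)
  rw [LJ_L R hR] at h3
  rcases hd with hd | hd
  · have := L_lt_card Q (i + 1) (i + 1) hQ.1 le_rfl
    omega
  · have a := L_succ Q i
    have b := L_le Q i
    simp only [hQ.2, if_false] at a
    omega

theorem KK_of_Pr (d1 d2 : ℕ) (n : ℕ) : ∀ (P Q R : Finset ℕ),
    (∑ x ∈ P, x) + (∑ x ∈ Q, x) + (∑ x ∈ R, x) = n →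
    ((Q.card = d1 + P.card ∧ R.card = d2 + Q.card) ∨ (d1 = 0 ∧ d2 = 0)) →
    Pr d1 P Q → Pr d2 Q R → KK P Q R := by
  induction n with
  | zero =>
    intro P Q R hs _ _ _
    apply KK.base
    · intro i hi; have := sum_mv i P hi; omega
    · intro i hi; have := sum_mv i Q hi; omega
    · intro i hi; have := sum_mv i R hi; omega
  | succ n ih =>
    intro P Q R hs hd h1 h2
    have S0 : ∀ i, Rm i P → ¬ Ad i Q → (Ad i R → Rm i Q) → KK P Q R := by
      intro i a b c
      refine KK.s0 i P Q R a b c (ih _ _ _ ?_ ?_ ?_ h2)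
      · have := sum_mv i P a; omega
      · rw [card_mv i P a]; exact hd
      · rwa [Pr_mvP d1 i P Q a b]
    have S1 : ∀ i, Rm i Q → ¬ Ad i R → ¬ Rm i P → KK P Q R := by
      intro i a b c
      refine KK.s1 i P Q R a b c (ih _ _ _ ?_ ?_ ?_ ?_)
      · have := sum_mv i Q a; omega
      · rw [card_mv i Q a]; exact hd
      · rwa [Pr_mvQ d1 i P Q a c]
      · rwa [Pr_mvP d2 i Q R a b]
    have S2 : ∀ i, Rm i R → ¬ Rm i Q → (Rm i P → Ad i Q) → KK P Q R := by
      intro i a b c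
      refine KK.s2 i P Q R a b c (ih _ _ _ ?_ ?_ h1 ?_)
      · have := sum_mv i R a; omega
      · rw [card_mv i R a]; exact hd
      · rwa [Pr_mvQ d2 i Q R a b]
    have N1 : ∀ i, Rm i Q → ¬ Ad i R → KK P Q R := by
      intro i a b
      by_cases c : Rm i P
      · refine S0 i c (fun h => h.2 a.1) (fun _ => a)
      · exact S1 i a b c
    have N2 : ∀ i, Rm i R → KK P Q R := by
      intro i a
      have b : ¬ Ad i R := fun h => h.2 a.1
      by_cases c : Rm i Q
      · exact N1 i c b
      · by_cases c' : Rm i P ∧ ¬ Ad i Q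
        · exact S0 i c'.1 c'.2 (fun h => absurd h b)
        · exact S2 i a c (fun h => by by_contra h'; exact c' ⟨h, h'⟩)
    by_cases hR : ∀ i, ¬ Rm i R
    · by_cases hQ : ∀ i, ¬ Rm i Q
      · by_cases hP : ∀ i, ¬ Rm i P
        · exact KK.base P Q R hP hQ hR
        · push Not at hP
          obtain ⟨i, hi⟩ := hP
          refine S0 i hi (noAd d1 i P Q hQ h1 (by omega) hi) (fun h => absurd h ?_)
          refine noAd (d1 + d2) i P R hR (fun c => ?_) (by omega) hi
          have := h1 c
          have := h2 c
          omega
      · push Not at hQ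
        obtain ⟨i, hi⟩ := hQ
        exact N1 i hi (noAd d2 i Q R hR h2 (by omega) hi)
    · push Not at hR
      obtain ⟨i, hi⟩ := hR
      exact N2 i hi

/-- The combinatorial R-matrix relation when one row is a singleton. -/
def RR (P Q P' Q' : Finset ℕ) : Prop :=
  ∃ (W : Finset ℕ) (p q : ℕ), p ≤ q ∧ (∀ x, p ≤ x → x ≤ q → x ∉ W) ∧
    (∀ x, x ∈ P ↔ x ∈ W ∨ x = p) ∧ (∀ x, x ∈ Q ↔ x = q) ∧
    (∀ x, x ∈ P' ↔ x = p) ∧ (∀ x, x ∈ Q' ↔ x ∈ W ∨ x = q)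

/-- Pair good move. -/
def EE (i : ℕ) (P Q P1 Q1 : Finset ℕ) : Prop :=
  (Rm i P ∧ ¬ Ad i Q ∧ P1 = mv i P ∧ Q1 = Q) ∨ (Rm i Q ∧ ¬ Rm i P ∧ P1 = P ∧ Q1 = mv i Q)

theorem RR_fwd {P Q P' Q' : Finset ℕ} (h : RR P Q P' Q') (i : ℕ) {P1 Q1 : Finset ℕ}
    (hE : EE i P Q P1 Q1) : ∃ P1' Q1', EE i P' Q' P1' Q1' ∧ RR P1 Q1 P1' Q1' := by
  obtain ⟨W, p, q, hpq, hW, hP, hQ, hP', hQ'⟩ := h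
  unfold EE Rm Ad at *
  rcases hE with ⟨⟨a, b⟩, c, rfl, rfl⟩ | ⟨⟨a, b⟩, c, rfl, rfl⟩
  · by_cases e : i + 1 = p
    · refine ⟨mv i P', Q', Or.inl ⟨by grind, by grind, rfl, rfl⟩, W, i, q, by grind, ?_, ?_, ?_, ?_, ?_⟩ <;>
        intro x <;> try rw [mem_mv]
      all_goals grind
    · refine ⟨P', mv i Q', Or.inr ⟨by grind, by grind, rfl, rfl⟩, mv i W, p, q, by grind, ?_, ?_, ?_, ?_, ?_⟩ <;>
        intro x <;> try simp only [mem_mv]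
      all_goals grind
  · by_cases e : p = i + 1
    · refine ⟨mv i P', Q', Or.inl ⟨by grind, by grind, rfl, rfl⟩, insert (i + 1) (W.erase i), i, i, by grind, ?_, ?_, ?_, ?_, ?_⟩ <;>
        intro x <;> try simp only [mem_mv, Finset.mem_insert, Finset.mem_erase]
      all_goals grind
    · refine ⟨P', mv i Q', Or.inr ⟨by grind, by grind, rfl, rfl⟩, W, p, i, by grind, ?_, ?_, ?_, ?_, ?_⟩ <;>
        intro x <;> try simp only [mem_mv]
      all_goals grind

theorem RR_bwd {P Q P' Q' : Finset ℕ} (h : RR P Q P' Q') (i : ℕ) {P1' Q1' : Finset ℕ}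
    (hE : EE i P' Q' P1' Q1') : ∃ P1 Q1, EE i P Q P1 Q1 ∧ RR P1 Q1 P1' Q1' := by
  obtain ⟨W, p, q, hpq, hW, hP, hQ, hP', hQ'⟩ := h
  unfold EE Rm Ad at *
  rcases hE with ⟨⟨a, b⟩, c, rfl, rfl⟩ | ⟨⟨a, b⟩, c, rfl, rfl⟩
  · by_cases e : i ∈ W
    · refine ⟨P, mv i Q, Or.inr ⟨by grind, by grind, rfl, rfl⟩, insert (i + 1) (W.erase i), i, i, by grind, ?_, ?_, ?_, ?_, ?_⟩ <;>
        intro x <;> try simp only [mem_mv, Finset.mem_insert, Finset.mem_erase]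
      all_goals grind
    · refine ⟨mv i P, Q, Or.inl ⟨by grind, by grind, rfl, rfl⟩, W, i, q, by grind, ?_, ?_, ?_, ?_, ?_⟩ <;>
        intro x <;> try simp only [mem_mv]
      all_goals grind
  · by_cases e : i + 1 ∈ W
    · refine ⟨mv i P, Q, Or.inl ⟨by grind, by grind, rfl, rfl⟩, mv i W, p, q, by grind, ?_, ?_, ?_, ?_, ?_⟩ <;>
        intro x <;> try simp only [mem_mv]
      all_goals grind
    · refine ⟨P, mv i Q, Or.inr ⟨by grind, by grind, rfl, rfl⟩, W, p, i, by grind, ?_, ?_, ?_, ?_, ?_⟩ <;>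
        intro x <;> try simp only [mem_mv]
      all_goals grind

theorem RR_eps2 {P Q P' Q' : Finset ℕ} (h : RR P Q P' Q') (i : ℕ) :
    (Rm i P ∧ Rm i Q) ↔ (Rm i P' ∧ Rm i Q') := by
  obtain ⟨W, p, q, hpq, hW, hP, hQ, hP', hQ'⟩ := h
  unfold Rm
  grind

theorem RR_phi {P Q P' Q' : Finset ℕ} (h : RR P Q P' Q') (i : ℕ) :
    (Ad i P ∨ (Ad i Q ∧ ¬ Rm i P)) ↔ (Ad i P' ∨ (Ad i Q' ∧ ¬ Rm i P')) := by
  obtain ⟨W, p, q, hpq, hW, hP, hQ, hP', hQ'⟩ := h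
  unfold Rm Ad
  have := hW i
  have := hW (i+1)
  grind

theorem RR_LJ {P Q P' Q' : Finset ℕ} (h : RR P Q P' Q') :
    ((∀ i, ¬ Rm i P) ∧ (∀ i, ¬ Rm i Q)) ↔ ((∀ i, ¬ Rm i P') ∧ (∀ i, ¬ Rm i Q')) := by
  obtain ⟨W, p, q, hpq, hW, hP, hQ, hP', hQ'⟩ := h
  constructor
  · rintro ⟨a, b⟩
    have hq : (0:ℕ) ∈ Q := LJ_down Q b q 0 ((hQ q).2 rfl) (by omega)
    have hq0 := (hQ 0).1 hq
    have : P = Q' := by ext x; rw [hP, hQ']; grind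
    have : Q = P' := by ext x; rw [hQ, hP']; grind
    subst_vars
    exact ⟨b, a⟩
  · rintro ⟨a, b⟩
    have hp : (0:ℕ) ∈ P' := LJ_down P' a p 0 ((hP' p).2 rfl) (by omega)
    have hp0 := (hP' 0).1 hp
    have hq : (0:ℕ) ∈ Q' := LJ_down Q' b q 0 ((hQ' q).2 (Or.inr rfl)) (by omega)
    have hq0 : 0 = q := by
      rcases (hQ' 0).1 hq with h | h
      · exact absurd h (hW 0 (by omega) (by omega))
      · exact h
    have : P = Q' := by ext x; rw [hP, hQ']; grind
    have : Q = P' := by ext x; rw [hQ, hP']; grind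
    subst_vars
    exact ⟨b, a⟩

theorem KK_EE12 {i : ℕ} {P Q R P1 Q1 : Finset ℕ} (hE : EE i P Q P1 Q1)
    (hR : Ad i R → Rm i P ∧ Rm i Q) (h : KK P1 Q1 R) : KK P Q R := by
  rcases hE with ⟨a, b, rfl, rfl⟩ | ⟨a, b, rfl, rfl⟩
  · exact KK.s0 i _ _ _ a b (fun h => (hR h).2) h
  · exact KK.s1 i _ _ _ a (fun h => b (hR h).1) b h

theorem noEE {i : ℕ} {P Q : Finset ℕ} :
    (∀ P1 Q1, ¬ EE i P Q P1 Q1) ↔ ¬ Rm i Q ∧ (Rm i P → Ad i Q) := by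
  unfold EE
  constructor
  · intro H
    have hQ : ¬ Rm i Q := by
      intro hi
      by_cases hp : Rm i P
      · exact H _ _ (Or.inl ⟨hp, fun h => h.2 hi.1, rfl, rfl⟩)
      · exact H _ _ (Or.inr ⟨hi, hp, rfl, rfl⟩)
    refine ⟨hQ, fun hp => ?_⟩
    by_contra hc
    exact H _ _ (Or.inl ⟨hp, hc, rfl, rfl⟩)
  · rintro ⟨a, b⟩ P1 Q1 (h | h)
    · exact h.2.1 (b h.1)
    · exact a h.1

theorem KK_RR12_fwd {P Q R : Finset ℕ} (h : KK P Q R) :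
    ∀ P' Q', RR P Q P' Q' → KK P' Q' R := by
  have step : ∀ i P Q R P1 Q1, EE i P Q P1 Q1 → (Ad i R → Rm i P ∧ Rm i Q) →
      (∀ P' Q', RR P1 Q1 P' Q' → KK P' Q' R) → ∀ P' Q', RR P Q P' Q' → KK P' Q' R := by
    intro i P Q R P1 Q1 hE hR ih P' Q' hr
    obtain ⟨P1', Q1', hE', hr'⟩ := RR_fwd hr i hE
    exact KK_EE12 hE' (fun h => (RR_eps2 hr i).1 (hR h)) (ih _ _ hr')
  induction h with
  | base P Q R hP hQ hR =>
    intro P' Q' hr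
    have := (RR_LJ hr).1 ⟨hP, hQ⟩
    exact KK.base _ _ _ this.1 this.2 hR
  | s0 i P Q R h0 h1 h2 h ih =>
    exact step i P Q R _ _ (Or.inl ⟨h0, h1, rfl, rfl⟩) (fun h => ⟨h0, h2 h⟩) ih
  | s1 i P Q R h0 h1 h2 h ih =>
    exact step i P Q R _ _ (Or.inr ⟨h0, h2, rfl, rfl⟩) (fun h => absurd h h1) ih
  | s2 i P Q R h0 h1 h2 h ih =>
    intro P' Q' hr
    have h3 : ∀ P1 Q1, ¬ EE i P' Q' P1 Q1 := by
      intro P1 Q1 hE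
      obtain ⟨_, _, hE', _⟩ := RR_bwd hr i hE
      exact noEE.2 ⟨h1, h2⟩ _ _ hE'
    rw [noEE] at h3
    exact KK.s2 i _ _ _ h0 h3.1 h3.2 (ih _ _ hr)

theorem KK_RR12_bwd {P' Q' R : Finset ℕ} (h : KK P' Q' R) :
    ∀ P Q, RR P Q P' Q' → KK P Q R := by
  have step : ∀ i P' Q' R P1 Q1, EE i P' Q' P1 Q1 → (Ad i R → Rm i P' ∧ Rm i Q') →
      (∀ P Q, RR P Q P1 Q1 → KK P Q R) → ∀ P Q, RR P Q P' Q' → KK P Q R := by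
    intro i P' Q' R P1' Q1' hE hR ih P Q hr
    obtain ⟨P1, Q1, hE', hr'⟩ := RR_bwd hr i hE
    exact KK_EE12 hE' (fun h => (RR_eps2 hr i).2 (hR h)) (ih _ _ hr')
  induction h with
  | base P Q R hP hQ hR =>
    intro P' Q' hr
    have := (RR_LJ hr).2 ⟨hP, hQ⟩
    exact KK.base _ _ _ this.1 this.2 hR
  | s0 i P Q R h0 h1 h2 h ih =>
    exact step i P Q R _ _ (Or.inl ⟨h0, h1, rfl, rfl⟩) (fun h => ⟨h0, h2 h⟩) ih
  | s1 i P Q R h0 h1 h2 h ih =>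
    exact step i P Q R _ _ (Or.inr ⟨h0, h2, rfl, rfl⟩) (fun h => absurd h h1) ih
  | s2 i P Q R h0 h1 h2 h ih =>
    intro P' Q' hr
    have h3 : ∀ P1 Q1, ¬ EE i P' Q' P1 Q1 := by
      intro P1 Q1 hE
      obtain ⟨_, _, hE', _⟩ := RR_fwd hr i hE
      exact noEE.2 ⟨h1, h2⟩ _ _ hE'
    rw [noEE] at h3
    exact KK.s2 i _ _ _ h0 h3.1 h3.2 (ih _ _ hr)

/-- `φ` of the pair is positive. -/
def PH (i : ℕ) (P Q : Finset ℕ) : Prop := Ad i P ∨ (Ad i Q ∧ ¬ Rm i P)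

theorem KK_EE23 {i : ℕ} {P Q R Q1 R1 : Finset ℕ} (hE : EE i Q R Q1 R1)
    (hP : Rm i P → PH i Q R) (h : KK P Q1 R1) : KK P Q R := by
  rcases hE with ⟨a, b, rfl, rfl⟩ | ⟨a, b, rfl, rfl⟩
  · refine KK.s1 i _ _ _ a b (fun h => ?_) h
    rcases hP h with h' | h'
    · exact h'.2 a.1
    · exact b h'.1
  · refine KK.s2 i _ _ _ a b (fun h => ?_) h
    rcases hP h with h' | h'
    · exact h'
    · exact absurd a.1 h'.1.2

theorem KK_s0' {i : ℕ} {P Q R : Finset ℕ} (a : Rm i P) (b : ¬ PH i Q R) (h : KK (mv i P) Q R) :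
    KK P Q R := by
  refine KK.s0 i _ _ _ a (fun h => b (Or.inl h)) (fun h => ?_) h
  by_contra hc
  exact b (Or.inr ⟨h, hc⟩)

theorem KK_RR23_fwd {P Q R : Finset ℕ} (h : KK P Q R) :
    ∀ Q' R', RR Q R Q' R' → KK P Q' R' := by
  have step : ∀ i P Q R Q1 R1, EE i Q R Q1 R1 → (Rm i P → PH i Q R) →
      (∀ Q' R', RR Q1 R1 Q' R' → KK P Q' R') → ∀ Q' R', RR Q R Q' R' → KK P Q' R' := by
    intro i P Q R Q1 R1 hE hP ih Q' R' hr
    obtain ⟨Q1', R1', hE', hr'⟩ := RR_fwd hr i hE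
    exact KK_EE23 hE' (fun h => (RR_phi hr i).1 (hP h)) (ih _ _ hr')
  induction h with
  | base P Q R hP hQ hR =>
    intro P' Q' hr
    have := (RR_LJ hr).1 ⟨hQ, hR⟩
    exact KK.base _ _ _ hP this.1 this.2
  | s0 i P Q R h0 h1 h2 h ih =>
    intro Q' R' hr
    refine KK_s0' h0 (fun hh => ?_) (ih _ _ hr)
    rcases (RR_phi hr i).2 hh with h' | h'
    · exact h1 h'
    · exact h'.2 (h2 h'.1)
  | s1 i P Q R h0 h1 h2 h ih =>
    exact step i P Q R _ _ (Or.inl ⟨h0, h1, rfl, rfl⟩) (fun h => absurd h h2) ih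
  | s2 i P Q R h0 h1 h2 h ih =>
    exact step i P Q R _ _ (Or.inr ⟨h0, h1, rfl, rfl⟩) (fun h => Or.inl (h2 h)) ih

theorem KK_RR23_bwd {P Q' R' : Finset ℕ} (h : KK P Q' R') :
    ∀ Q R, RR Q R Q' R' → KK P Q R := by
  have step : ∀ i P Q' R' Q1 R1, EE i Q' R' Q1 R1 → (Rm i P → PH i Q' R') →
      (∀ Q R, RR Q R Q1 R1 → KK P Q R) → ∀ Q R, RR Q R Q' R' → KK P Q R := by
    intro i P Q R Q1 R1 hE hP ih Q' R' hr
    obtain ⟨Q1', R1', hE', hr'⟩ := RR_bwd hr i hE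
    exact KK_EE23 hE' (fun h => (RR_phi hr i).2 (hP h)) (ih _ _ hr')
  induction h with
  | base P Q R hP hQ hR =>
    intro P' Q' hr
    have := (RR_LJ hr).2 ⟨hQ, hR⟩
    exact KK.base _ _ _ hP this.1 this.2
  | s0 i P Q R h0 h1 h2 h ih =>
    intro Q' R' hr
    refine KK_s0' h0 (fun hh => ?_) (ih _ _ hr)
    rcases (RR_phi hr i).1 hh with h' | h'
    · exact h1 h'
    · exact h'.2 (h2 h'.1)
  | s1 i P Q R h0 h1 h2 h ih =>
    exact step i P Q R _ _ (Or.inl ⟨h0, h1, rfl, rfl⟩) (fun h => absurd h h2) ih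
  | s2 i P Q R h0 h1 h2 h ih =>
    exact step i P Q R _ _ (Or.inr ⟨h0, h1, rfl, rfl⟩) (fun h => Or.inl (h2 h)) ih

theorem KK_RR12 {P Q R P' Q' : Finset ℕ} (hr : RR P Q P' Q') : KK P Q R ↔ KK P' Q' R :=
  ⟨fun h => KK_RR12_fwd h _ _ hr, fun h => KK_RR12_bwd h _ _ hr⟩

theorem KK_RR23 {P Q R Q' R' : Finset ℕ} (hr : RR Q R Q' R') : KK P Q R ↔ KK P Q' R' :=
  ⟨fun h => KK_RR23_fwd h _ _ hr, fun h => KK_RR23_bwd h _ _ hr⟩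

end

section

theorem L_disj (C E : Finset ℕ) (h : Disjoint C E) (c : ℕ) : L (C ∪ E) c = L C c + L E c := by
  unfold L
  rw [Finset.filter_union, Finset.card_union_of_disjoint]
  exact Finset.disjoint_filter_filter h

theorem L_single (s c : ℕ) : L {s} c = if s < c then 1 else 0 := by
  unfold L
  rw [Finset.filter_singleton]
  split_ifs <;> simp

theorem Pr_single (s : ℕ) (T : Finset ℕ) (hT : T.Nonempty) :
    Pr (T.card - 1) {s} T ↔ ∃ t ∈ T, s ≤ t := by
  have hc : 0 < T.card := Finset.card_pos.2 hT
  constructor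
  · intro H
    by_contra hcon
    push Not at hcon
    have := H s
    rw [L_single] at this
    have h2 : L T s = T.card := by
      unfold L; rw [Finset.filter_true_of_mem hcon]
    simp at this
    omega
  · rintro ⟨t, ht, hst⟩ c
    rw [L_single]
    split_ifs with h
    · have := L_le_card T c; omega
    · have := L_lt_card T c t ht (by omega); omega

theorem Pr_single' (s : ℕ) (T : Finset ℕ) :
    Pr 0 T {s} ↔ ∃ t ∈ T, t ≤ s := by
  constructor
  · intro H
    have := H (s + 1)
    rw [L_single] at this
    simp at this
    have h2 : 0 < L T (s + 1) := by omega
    unfold L at h2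
    obtain ⟨t, ht⟩ := Finset.card_pos.1 h2
    rw [Finset.mem_filter] at ht
    exact ⟨t, ht.1, by omega⟩
  · rintro ⟨t, ht, hst⟩ c
    rw [L_single]
    split_ifs with h
    · have : 0 < L T c := Finset.card_pos.2 ⟨t, by rw [Finset.mem_filter]; exact ⟨ht, by omega⟩⟩
      omega
    · omega

theorem KK_up (P Q R : Finset ℕ) (h1 : P.card ≤ Q.card) (h2 : Q.card ≤ R.card) :
    KK P Q R ↔ Pr (Q.card - P.card) P Q ∧ Pr (R.card - Q.card) Q R := by
  constructor
  · intro h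
    exact ⟨KK_Pr12 h _ (by omega), KK_Pr23 h _ (by omega)⟩
  · rintro ⟨a, b⟩
    exact KK_of_Pr _ _ _ P Q R rfl (by omega) a b

theorem KK_down (P Q R : Finset ℕ) (h1 : Q.card ≤ P.card) (h2 : R.card ≤ Q.card) :
    KK P Q R ↔ Pr 0 P Q ∧ Pr 0 Q R := by
  constructor
  · intro h
    exact ⟨KK_Pr12 h _ (by omega), KK_Pr23 h _ (by omega)⟩
  · rintro ⟨a, b⟩
    exact KK_of_Pr _ _ _ P Q R rfl (by omega) a b

theorem up_sub (T N : Finset ℕ) (h : T ⊆ N) : Pr (N.card - T.card) T N ∧ Pr 0 N T ∧ T.card ≤ N.card := by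
  have e : N = T ∪ (N \ T) := by rw [Finset.union_sdiff_of_subset h]
  have hd : Disjoint T (N \ T) := Finset.disjoint_sdiff
  have hL := fun c => L_disj T (N \ T) hd c
  rw [← e] at hL
  have hc := Finset.card_sdiff_add_card_eq_card h
  refine ⟨fun c => ?_, fun c => ?_, Finset.card_le_card h⟩
  · have := L_le_card (N \ T) c
    rw [hL]; omega
  · rw [hL]; omega

theorem up_one (T N : Finset ℕ) (t : ℕ) (ht : t ∈ T) (htN : t ∉ N) (h : ∀ x ∈ T, x ≠ t → x ∈ N)
    (hne : ∃ x ∈ N, x ∉ T) : T.card ≤ N.card ∧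
    (Pr (N.card - T.card) T N ↔ ∃ x ∈ N, x ∉ T ∧ t ≤ x) ∧
    (Pr 0 N T ↔ ∃ x ∈ N, x ∉ T ∧ x ≤ t) := by
  have eT : T = T.erase t ∪ {t} := by
    ext x; simp only [Finset.mem_union, Finset.mem_erase, Finset.mem_singleton]; grind
  have eN : N = T.erase t ∪ (N \ T) := by
    ext x; simp only [Finset.mem_union, Finset.mem_erase, Finset.mem_sdiff]; grind
  have dT : Disjoint (T.erase t) {t} := by simp
  have dN : Disjoint (T.erase t) (N \ T) := by
    rw [Finset.disjoint_left]; intro x; simp only [Finset.mem_erase, Finset.mem_sdiff]; grind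
  have LT := fun c => L_disj _ _ dT c
  have LN := fun c => L_disj _ _ dN c
  have cT := Finset.card_union_of_disjoint dT
  have cN := Finset.card_union_of_disjoint dN
  rw [← eT] at LT cT
  rw [← eN] at LN cN
  have hE : (N \ T).Nonempty := by
    obtain ⟨x, h1, h2⟩ := hne
    exact ⟨x, by simp [h1, h2]⟩
  have hE' := Finset.card_pos.2 hE
  have c1 : ({t} : Finset ℕ).card = 1 := by simp
  refine ⟨by omega, ?_, ?_⟩
  · have := Pr_single t (N \ T) hE
    simp only [Finset.mem_sdiff, and_assoc] at this
    rw [← this]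
    unfold Pr
    apply forall_congr'
    intro c
    rw [LT, LN]; omega
  · have := Pr_single' t (N \ T)
    simp only [Finset.mem_sdiff, and_assoc] at this
    rw [← this]
    unfold Pr
    apply forall_congr'
    intro c
    rw [LT, LN]; omega

/-- Generic form of `RR`. -/
def RG {α : Type} [LinearOrder α] (P Q P' Q' : Finset α) : Prop :=
  ∃ (W : Finset α) (p q : α), p ≤ q ∧ (∀ x, p ≤ x → x ≤ q → x ∉ W) ∧
    (∀ x, x ∈ P ↔ x ∈ W ∨ x = p) ∧ (∀ x, x ∈ Q ↔ x = q) ∧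
    (∀ x, x ∈ P' ↔ x = p) ∧ (∀ x, x ∈ Q' ↔ x ∈ W ∨ x = q)

/-- The properties of the Kleshchev predicate used in the evaluation. -/
structure KP (α : Type) [LinearOrder α] (K : Finset α → Finset α → Finset α → Prop) : Prop where
  h12 : ∀ P Q R P' Q', RG P Q P' Q' → (K P Q R ↔ K P' Q' R)
  h23 : ∀ P Q R Q' R', RG Q R Q' R' → (K P Q R ↔ K P Q' R')
  n12 : ∀ P Q R q, (∀ x, x ∈ Q ↔ x = q) → P.Nonempty → K P Q R → ∃ p ∈ P, p ≤ q
  n23 : ∀ P Q R q, (∀ x, x ∈ R ↔ x = q) → Q.Nonempty → K P Q R → ∃ p ∈ Q, p ≤ q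
  bs : ∀ S T N s, (∀ x, x ∈ S ↔ x = s) → T.Nonempty → T ⊆ N → (K S T N ↔ ∃ t ∈ T, s ≤ t)
  bo : ∀ S T N s t, (∀ x, x ∈ S ↔ x = s) → t ∈ T → t ∉ N → (∀ x ∈ T, x ≠ t → x ∈ N) →
    (∃ x ∈ N, x ∉ T) → (K S T N ↔ (∃ t ∈ T, s ≤ t) ∧ ∃ x ∈ N, x ∉ T ∧ t ≤ x)

theorem eq_single {S : Finset ℕ} {s : ℕ} (h : ∀ x, x ∈ S ↔ x = s) : S = {s} := by
  ext x; simp [h]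

theorem KP_nat : KP ℕ KK where
  h12 := fun P Q R P' Q' h => KK_RR12 h
  h23 := fun P Q R Q' R' h => KK_RR23 h
  n12 := by
    intro P Q R q hQ hP h
    rw [eq_single hQ] at h
    have := Finset.card_pos.2 hP
    exact (Pr_single' q P).1 (KK_Pr12 h 0 (by simp; omega))
  n23 := by
    intro P Q R q hQ hP h
    rw [eq_single hQ] at h
    have := Finset.card_pos.2 hP
    exact (Pr_single' q Q).1 (KK_Pr23 h 0 (by simp; omega))
  bs := by
    intro S T N s hS hT hTN
    rw [eq_single hS]
    have := Finset.card_pos.2 hT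
    obtain ⟨a, b, c⟩ := up_sub T N hTN
    rw [KK_up _ _ _ (by simp; omega) c, Finset.card_singleton, Pr_single s T hT]
    simp [a]
  bo := by
    intro S T N s t hS ht htN h hne
    rw [eq_single hS]
    have hT : T.Nonempty := ⟨t, ht⟩
    have := Finset.card_pos.2 hT
    obtain ⟨a, b, c⟩ := up_one T N t ht htN h hne
    rw [KK_up _ _ _ (by simp; omega) a, Finset.card_singleton, Pr_single s T hT, b]

theorem kd_n12 (P Q R : Finset ℕ) (q : ℕ) (hQ : ∀ x, x ∈ Q ↔ x = q) (hP : P.Nonempty)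
    (h : KK R Q P) : ∃ p ∈ P, q ≤ p := by
  rw [eq_single hQ] at h
  have h2 : 0 < P.card := Finset.card_pos.2 hP
  refine (Pr_single q P hP).1 (KK_Pr23 h _ ?_)
  rw [Finset.card_singleton]; omega

theorem kd_n23 (P Q R : Finset ℕ) (q : ℕ) (hQ : ∀ x, x ∈ R ↔ x = q) (hP : Q.Nonempty)
    (h : KK R Q P) : ∃ p ∈ Q, q ≤ p := by
  rw [eq_single hQ] at h
  have h2 : 0 < Q.card := Finset.card_pos.2 hP
  refine (Pr_single q Q hP).1 (KK_Pr12 h _ ?_)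
  rw [Finset.card_singleton]; omega

theorem kd_bs (S T N : Finset ℕ) (s : ℕ) (hS : ∀ x, x ∈ S ↔ x = s) (hT : T.Nonempty)
    (hTN : T ⊆ N) : KK N T S ↔ ∃ t ∈ T, t ≤ s := by
  have h2 : 0 < T.card := Finset.card_pos.2 hT
  obtain ⟨a, b, c⟩ := up_sub T N hTN
  rw [eq_single hS, KK_down _ _ _ c (by rw [Finset.card_singleton]; omega), Pr_single' s T]
  constructor
  · exact fun h => h.2
  · exact fun h => ⟨b, h⟩

theorem kd_bo (S T N : Finset ℕ) (s t : ℕ) (hS : ∀ x, x ∈ S ↔ x = s) (ht : t ∈ T) (htN : t ∉ N)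
    (h : ∀ x ∈ T, x ≠ t → x ∈ N) (hne : ∃ x ∈ N, x ∉ T) :
    KK N T S ↔ (∃ t ∈ T, t ≤ s) ∧ ∃ x ∈ N, x ∉ T ∧ x ≤ t := by
  have h2 : 0 < T.card := Finset.card_pos.2 ⟨t, ht⟩
  obtain ⟨a, b, c⟩ := up_one T N t ht htN h hne
  rw [eq_single hS, KK_down _ _ _ a (by rw [Finset.card_singleton]; omega), Pr_single' s T, c]
  exact and_comm

/-- The mirrored predicate. -/
def KD (P Q R : Finset ℕᵒᵈ) : Prop := KK R Q P

theorem KP_dual : KP ℕᵒᵈ KD where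
  h12 := by
    rintro P Q R P' Q' ⟨W, p, q, a, b, c, d, e, f⟩
    exact (KK_RR23 (P := R) (Q := Q') (R := P') (Q' := Q) (R' := P)
      ⟨W, q, p, a, fun x h1 h2 => b x h2 h1, f, e, d, c⟩).symm
  h23 := by
    rintro P Q R Q' R' ⟨W, p, q, a, b, c, d, e, f⟩
    exact (KK_RR12 (R := P) (P := R') (Q := Q') (P' := R) (Q' := Q)
      ⟨W, q, p, a, fun x h1 h2 => b x h2 h1, f, e, d, c⟩).symm
  n12 := fun P Q R q hQ hP h => kd_n12 P Q R q hQ hP h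
  n23 := fun P Q R q hQ hP h => kd_n23 P Q R q hQ hP h
  bs := fun S T N s hS hT hTN => kd_bs S T N s hS hT hTN
  bo := fun S T N s t hS ht htN h hne => kd_bo S T N s t hS ht htN h hne

section eval
variable {α : Type} [LinearOrder α] {K : Finset α → Finset α → Finset α → Prop}

/-- The configurations `α`, `β`. -/
def F0 (A B : Finset α) (m : α) (S T N : Finset α) : Prop :=
  (∀ x, x ∈ S ↔ x = m) ∧ (∀ x, x ∈ T ↔ x ∈ A) ∧ (∀ x, x ∈ N ↔ (x ∈ A ∨ x ∈ B) ∧ x ≠ m)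

/-- The configurations `γ`. -/
def F1 (A B : Finset α) (k l : α) (S T N : Finset α) : Prop :=
  (∀ x, x ∈ S ↔ x = k) ∧ (∀ x, x ∈ T ↔ (x ∈ A ∧ x ≠ k) ∨ x = l) ∧
    (∀ x, x ∈ N ↔ (x ∈ A ∨ x ∈ B) ∧ x ≠ l)

theorem exists_pred (s : Finset α) (q : α) (h : ∃ p ∈ s, p ≤ q) :
    ∃ p ∈ s, p ≤ q ∧ ∀ x ∈ s, x ≤ q → x ≤ p := by
  have hne : (s.filter (fun x => x ≤ q)).Nonempty := by
    obtain ⟨p, h1, h2⟩ := h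
    exact ⟨p, by simp [h1, h2]⟩
  obtain ⟨p, hp, hm⟩ := Finset.exists_max_image _ (fun x => x) hne
  rw [Finset.mem_filter] at hp
  refine ⟨p, hp.1, hp.2, fun x h1 h2 => hm x ?_⟩
  simp [h1, h2]

theorem e1a (hK : KP α K) {A B : Finset α} (hAB : ∀ x, x ∈ A → x ∉ B)
    {S T N : Finset α} {k : α} (hk : k ∈ A) (hB : B.Nonempty) (h : F0 A B k S T N) :
    K S T N ↔ ∃ b ∈ B, k < b := by
  obtain ⟨h1, h2, h3⟩ := h
  obtain ⟨b0, hb0⟩ := hB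
  rw [hK.bo S T N k k h1 (by grind) (by grind) (by grind) ⟨b0, by grind⟩]
  constructor
  · rintro ⟨-, x, hx⟩; exact ⟨x, by grind⟩
  · rintro ⟨b, hb⟩; exact ⟨⟨k, by grind⟩, b, by grind⟩

theorem e1b (hK : KP α K) {A B : Finset α} (hAB : ∀ x, x ∈ A → x ∉ B)
    {S T N : Finset α} {l : α} (hl : l ∈ B) (hA : A.Nonempty) (h : F0 A B l S T N) :
    K S T N ↔ ∃ a ∈ A, l < a := by
  obtain ⟨h1, h2, h3⟩ := h
  obtain ⟨a0, ha0⟩ := hA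
  rw [hK.bs S T N l h1 ⟨a0, by grind⟩ (fun x => by grind)]
  constructor
  · rintro ⟨x, hx⟩; exact ⟨x, by grind⟩
  · rintro ⟨b, hb⟩; exact ⟨b, by grind⟩

theorem e1g (hK : KP α K) {A B : Finset α} (hAB : ∀ x, x ∈ A → x ∉ B)
    {S T N : Finset α} {k l : α} (hk : k ∈ A) (hl : l ∈ B) (h : F1 A B k l S T N) :
    K S T N ↔ (k < l ∧ ∃ b ∈ B, l < b) ∨ (l < k ∧ ∃ a ∈ A, k < a) := by
  obtain ⟨h1, h2, h3⟩ := h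
  have hkl : k ≠ l := by grind
  rw [hK.bo S T N k l h1 (by grind) (by grind) (by grind) ⟨k, by grind⟩]
  rcases lt_or_gt_of_ne hkl with c | c
  · constructor
    · rintro ⟨-, x, hx⟩; exact Or.inl ⟨c, x, by grind⟩
    · rintro (⟨-, b, hb⟩ | ⟨h, -⟩)
      · exact ⟨⟨l, by grind⟩, b, by grind⟩
      · exact absurd h (not_lt.2 c.le)
  · constructor
    · rintro ⟨⟨x, hx⟩, -⟩; exact Or.inr ⟨c, x, by grind⟩
    · rintro (⟨h, -⟩ | ⟨-, b, hb⟩)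
      · exact absurd h (not_lt.2 c.le)
      · exact ⟨⟨b, by grind⟩, k, by grind⟩

theorem e4a (hK : KP α K) {A B : Finset α} (hAB : ∀ x, x ∈ A → x ∉ B)
    {S T N : Finset α} {k : α} (hk : k ∈ A) (hB : B.Nonempty) (h : F0 A B k S T N) :
    K T S N ↔ ∃ b ∈ B, k < b := by
  rw [← e1a hK hAB hk hB h]
  obtain ⟨h1, h2, h3⟩ := h
  apply hK.h12
  refine ⟨T.erase k, k, k, le_rfl, ?_, ?_, h1, h1, ?_⟩ <;> intro x <;>
    (try simp only [Finset.mem_erase]) <;> grind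

theorem e4b (hK : KP α K) {A B : Finset α} (hAB : ∀ x, x ∈ A → x ∉ B)
    {S T N : Finset α} {l : α} (hl : l ∈ B) (hA : A.Nonempty) (h : F0 A B l S T N) :
    K T S N ↔ (∃ a ∈ A, a < l) ∧ ∃ b ∈ B, l < b := by
  obtain ⟨h1, h2, h3⟩ := h
  obtain ⟨a0, ha0⟩ := hA
  by_cases hp : ∃ p ∈ T, p ≤ l
  · have hp' : ∃ a ∈ A, a < l := by obtain ⟨p, hp⟩ := hp; exact ⟨p, by grind⟩
    obtain ⟨p, hpT, hpl, hm⟩ := exists_pred T l hp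
    have r : RG T S {p} (insert l (T.erase p)) := by
      refine ⟨T.erase p, p, l, hpl, ?_, ?_, h1, ?_, ?_⟩ <;> intro x <;>
        (try simp only [Finset.mem_erase, Finset.mem_insert, Finset.mem_singleton]) <;> grind
    rw [hK.h12 _ _ N _ _ r, e1g hK hAB (k := p) (l := l) (by grind) hl ?_]
    · grind
    · refine ⟨?_, ?_, ?_⟩ <;> intro x <;>
        (try simp only [Finset.mem_erase, Finset.mem_insert, Finset.mem_singleton]) <;> grind
  · constructor
    · intro hh; exact absurd (hK.n12 T S N l h1 ⟨a0, by grind⟩ hh) hp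
    · rintro ⟨⟨a, ha⟩, -⟩; exact absurd ⟨a, by grind⟩ hp

theorem e4g (hK : KP α K) {A B : Finset α} (hAB : ∀ x, x ∈ A → x ∉ B)
    {S T N : Finset α} {k l : α} (hk : k ∈ A) (hl : l ∈ B) (h : F1 A B k l S T N) :
    K T S N ↔ l < k ∨ ((∃ a ∈ A, a < k) ∧ ∃ b ∈ B, l < b) := by
  obtain ⟨h1, h2, h3⟩ := h
  have hkl : k ≠ l := by grind
  by_cases hp : ∃ p ∈ T, p ≤ k
  · obtain ⟨p, hpT, hpl, hm⟩ := exists_pred T k hp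
    have r : RG T S {p} (insert k (T.erase p)) := by
      refine ⟨T.erase p, p, k, hpl, ?_, ?_, h1, ?_, ?_⟩ <;> intro x <;>
        (try simp only [Finset.mem_erase, Finset.mem_insert, Finset.mem_singleton]) <;> grind
    rw [hK.h12 _ _ N _ _ r]
    by_cases e : p = l
    · rw [e1b hK hAB (l := l) hl ⟨k, hk⟩ ?_]
      · constructor
        · intro _; left; grind
        · intro _; exact ⟨k, by grind⟩
      · refine ⟨?_, ?_, ?_⟩ <;> intro x <;>
          (try simp only [Finset.mem_erase, Finset.mem_insert, Finset.mem_singleton]) <;> grind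
    · rw [e1g hK hAB (k := p) (l := l) (by grind) hl ?_]
      · constructor
        · rintro (⟨a, b⟩ | ⟨a, b⟩)
          · right; exact ⟨⟨p, by grind⟩, b⟩
          · left; grind
        · rintro (a | ⟨a, b⟩)
          · right; exact ⟨by grind, k, by grind⟩
          · by_cases c : l < k
            · right; exact ⟨by grind, k, by grind⟩
            · left; exact ⟨by grind, b⟩
      · refine ⟨?_, ?_, ?_⟩ <;> intro x <;>
          (try simp only [Finset.mem_erase, Finset.mem_insert, Finset.mem_singleton]) <;> grind
  · constructor
    · intro hh; exact absurd (hK.n12 T S N k h1 ⟨l, by grind⟩ hh) hp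
    · rintro (a | ⟨⟨a, ha⟩, -⟩)
      · exact absurd ⟨l, by grind⟩ hp
      · exact absurd ⟨a, by grind⟩ hp

theorem e3 (hK : KP α K) {A B : Finset α} (hAB : ∀ x, x ∈ A → x ∉ B)
    {S T N : Finset α} (m : α) (hm : m ∈ A ∨ m ∈ B) (hA : A.Nonempty) (hB : B.Nonempty) (h : F0 A B m S T N) :
    K T N S ↔ (∃ a ∈ A, a < m) ∧ ∃ b ∈ B, m ≤ b := by
  obtain ⟨h1, h2, h3⟩ := h
  by_cases hp : ∃ p ∈ N, p ≤ m
  · obtain ⟨q, hq, hqm, hmx⟩ := exists_pred N m hp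
    have r : RG N S {q} (insert m (N.erase q)) := by
      refine ⟨N.erase q, q, m, hqm, ?_, ?_, h1, ?_, ?_⟩ <;> intro x <;>
        (try simp only [Finset.mem_erase, Finset.mem_insert, Finset.mem_singleton]) <;> grind
    rw [hK.h23 T _ _ _ _ r]
    have hF : F0 A B q {q} T (insert m (N.erase q)) := by
      refine ⟨?_, ?_, ?_⟩ <;> intro x <;>
        (try simp only [Finset.mem_erase, Finset.mem_insert, Finset.mem_singleton]) <;> grind
    by_cases hqA : q ∈ A
    · rw [e4a hK hAB hqA hB hF]
      constructor
      · rintro ⟨b, hb⟩; exact ⟨⟨q, by grind⟩, b, by grind⟩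
      · rintro ⟨-, b, hb⟩; exact ⟨b, by grind⟩
    · rw [e4b hK hAB (by grind) hA hF]
      constructor
      · rintro ⟨⟨a, ha⟩, b, hb⟩; exact ⟨⟨a, by grind⟩, b, by grind⟩
      · rintro ⟨⟨a, ha⟩, b, hb⟩; exact ⟨⟨a, by grind⟩, b, by grind⟩
  · constructor
    · intro hh
      refine absurd (hK.n23 T N S m h1 ?_ hh) hp
      obtain ⟨a, ha⟩ := hA
      obtain ⟨b, hb⟩ := hB
      by_cases c : m = a
      · exact ⟨b, by grind⟩
      · exact ⟨a, by grind⟩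
    · rintro ⟨⟨a, ha⟩, -⟩; exact absurd ⟨a, by grind⟩ hp

theorem e3g (hK : KP α K) {A B : Finset α} (hAB : ∀ x, x ∈ A → x ∉ B)
    {S T N : Finset α} {k l : α} (hk : k ∈ A) (hl : l ∈ B) (h : F1 A B k l S T N) :
    K T N S ↔ l < k ∨ ((∃ a ∈ A, a < k) ∧ ∃ b ∈ B, l < b) := by
  rw [← e4g hK hAB hk hl h]
  obtain ⟨h1, h2, h3⟩ := h
  apply hK.h23
  refine ⟨N.erase k, k, k, le_rfl, ?_, ?_, h1, h1, ?_⟩ <;> intro x <;>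
    (try simp only [Finset.mem_erase]) <;> grind

end eval

end

section

/-- The beta-set attached to a finite set of nonnegative positions. -/
def TT (P : Finset ℕ) : Set ℤ := {z | z < 0 ∨ (0 ≤ z ∧ z.toNat ∈ P)}

def LZ (P : Finset ℕ) (c : ℤ) : ℤ := if c < 0 then c else (L P c.toNat : ℤ)

theorem LZ_succ (P : Finset ℕ) (c : ℤ) : LZ P (c + 1) = LZ P c + if c ∈ TT P then 1 else 0 := by
  unfold LZ TT
  simp only [Set.mem_ofPred_eq]
  rcases lt_or_ge c 0 with h | h
  · rcases lt_or_ge (c+1) 0 with h' | h'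
    · simp [h, h']
    · have : c = -1 := by omega
      subst this
      simp [L_zero]
  · obtain ⟨n, rfl⟩ := Int.eq_ofNat_of_zero_le h
    have h1 : ¬ ((n:ℤ) + 1 < 0) := by omega
    have h2 : ¬ ((n:ℤ) < 0) := by omega
    have h3 : ((n:ℤ) + 1).toNat = n + 1 := by omega
    simp only [h1, h2, h3, if_false, L_succ]
    simp

theorem LZ_le (P : Finset ℕ) (c : ℤ) : LZ P c ≤ c := by
  unfold LZ
  split_ifs
  · exact le_rfl
  · have := L_le P c.toNat
    omega

theorem LZ_const (P : Finset ℕ) (a : ℤ) (m : ℕ) (h : ∀ z, a ≤ z → z < a + m → z ∉ TT P) :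
    LZ P (a + m) = LZ P a := by
  induction m with
  | zero => simp
  | succ m ih =>
    have := LZ_succ P (a + m)
    rw [if_neg (h _ (by omega) (by push_cast; omega))] at this
    push_cast
    rw [← add_assoc, this, add_zero]
    exact ih (fun z h1 h2 => h z h1 (by push_cast; omega))

theorem LZ_const' (P : Finset ℕ) (a b : ℤ) (hab : a ≤ b) (h : ∀ z, a ≤ z → z < b → z ∉ TT P) :
    LZ P b = LZ P a := by
  have := LZ_const P a (b - a).toNat (fun z h1 h2 => h z h1 (by omega))
  rwa [show a + ((b - a).toNat : ℤ) = b by omega] at this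

theorem LZ_top (P : Finset ℕ) (b : ℤ) (hb : 0 ≤ b) (h : ∀ z ∈ TT P, z < b) : LZ P b = P.card := by
  unfold LZ
  rw [if_neg (by omega), L, Finset.filter_true_of_mem]
  intro x hx
  have := h x (Or.inr ⟨by omega, by simpa using hx⟩)
  omega

theorem TT_bdd (P : Finset ℕ) : BddAbove (TT P) := by
  refine ⟨(P.sup id : ℕ), ?_⟩
  rintro z (h | ⟨h, h'⟩)
  · omega
  · have : z.toNat ≤ P.sup id := Finset.le_sup (f := id) h'
    omega

theorem TT_neg (P : Finset ℕ) (z : ℤ) (h : z < 0) : z ∈ TT P := Or.inl h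

theorem tE0 (P : Finset ℕ) : IsGreatest (TT P) (tEnum (TT P) 0) := by
  have hb := TT_bdd P
  have hne : (TT P).Nonempty := ⟨-1, TT_neg P _ (by omega)⟩
  exact ⟨Int.csSup_mem hne hb, fun z hz => le_csSup hb hz⟩

theorem tE1 (P : Finset ℕ) (x : ℕ) :
    IsGreatest (TT P ∩ Set.Iio (tEnum (TT P) x)) (tEnum (TT P) (x + 1)) := by
  have hb : BddAbove (TT P ∩ Set.Iio (tEnum (TT P) x)) := (TT_bdd P).mono Set.inter_subset_left
  have hne : (TT P ∩ Set.Iio (tEnum (TT P) x)).Nonempty :=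
    ⟨min (-1) (tEnum (TT P) x - 1), TT_neg P _ (by omega), by simp⟩
  exact ⟨Int.csSup_mem hne hb, fun z hz => le_csSup hb hz⟩

theorem tE_mem (P : Finset ℕ) (x : ℕ) : tEnum (TT P) x ∈ TT P := by
  cases x with
  | zero => exact (tE0 P).1
  | succ x => exact (tE1 P x).1.1

theorem tE_lt (P : Finset ℕ) (x : ℕ) : tEnum (TT P) (x + 1) < tEnum (TT P) x := (tE1 P x).1.2

theorem tE_LZ (P : Finset ℕ) (x : ℕ) : LZ P (tEnum (TT P) x) + x + 1 = P.card := by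
  induction x with
  | zero =>
    have h := tE0 P
    set t := tEnum (TT P) 0 with ht
    have h1 : -1 ≤ t := h.2 (TT_neg P _ (by omega))
    have h2 := LZ_top P (t + 1) (by omega) (fun z hz => by have := h.2 hz; omega)
    rw [LZ_succ, if_pos h.1] at h2
    push_cast; omega
  | succ x ih =>
    have h := tE1 P x
    set t := tEnum (TT P) (x + 1) with ht
    set t' := tEnum (TT P) x with ht'
    have h0 : t < t' := h.1.2
    have h1 := LZ_const' P (t + 1) t' (by omega) (fun z hz1 hz2 hz => by
      have := h.2 ⟨hz, hz2⟩; omega)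
    rw [LZ_succ, if_pos h.1.1] at h1
    push_cast; omega

theorem LZ_mono (P : Finset ℕ) (a b : ℤ) (h : a ≤ b) : LZ P a ≤ LZ P b := by
  obtain ⟨m, rfl⟩ : ∃ m : ℕ, b = a + m := ⟨(b - a).toNat, by omega⟩
  clear h
  induction m with
  | zero => simp
  | succ m ih =>
    have := LZ_succ P (a + m)
    push_cast
    rw [← add_assoc, this]
    split_ifs <;> omega

theorem LZ_inj (P : Finset ℕ) (a b : ℤ) (ha : a ∈ TT P) (hb : b ∈ TT P) (h : LZ P a = LZ P b) :
    a = b := by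
  rcases lt_trichotomy a b with h' | h' | h'
  · have := LZ_mono P (a + 1) b (by omega)
    rw [LZ_succ, if_pos ha] at this; omega
  · exact h'
  · have := LZ_mono P (b + 1) a (by omega)
    rw [LZ_succ, if_pos hb] at this; omega

theorem tE_surj (P : Finset ℕ) (z : ℤ) (hz : z ∈ TT P) : ∃ x, tEnum (TT P) x = z := by
  have h0 := (tE0 P).2 hz
  have h1 := LZ_mono P (z + 1) (tEnum (TT P) 0 + 1) (by omega)
  rw [LZ_succ, LZ_succ, if_pos hz, if_pos (tE_mem P 0)] at h1
  have h2 := tE_LZ P 0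
  refine ⟨(P.card - 1 - LZ P z).toNat, LZ_inj P _ _ (tE_mem P _) hz ?_⟩
  have := tE_LZ P (P.card - 1 - LZ P z).toNat
  omega

theorem tE_uniq (P : Finset ℕ) (t : ℕ → ℤ) (h0 : ∀ x, t (x + 1) < t x) (h1 : ∀ x, t x ∈ TT P)
    (h2 : ∀ z ∈ TT P, ∃ x, t x = z) (x : ℕ) : tEnum (TT P) x = t x := by
  have ha : StrictAnti t := strictAnti_nat_of_succ_lt h0
  induction x with
  | zero =>
    refine IsGreatest.csSup_eq ⟨h1 0, ?_⟩
    intro z hz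
    obtain ⟨x, rfl⟩ := h2 z hz
    exact ha.antitone (Nat.zero_le x)
  | succ x ih =>
    show sSup _ = _
    refine IsGreatest.csSup_eq ⟨⟨h1 _, ?_⟩, ?_⟩
    · show t (x + 1) < tEnum (TT P) x
      rw [ih]; exact h0 x
    · rintro z ⟨hz, hz'⟩
      obtain ⟨w, rfl⟩ := h2 z hz
      have hz'' : t w < t x := by rw [← ih]; exact hz'
      exact ha.antitone (ha.lt_iff_gt.1 hz'')

/-- The partition attached to `P`. -/
def pp (P : Finset ℕ) (x : ℕ) : ℕ := (tEnum (TT P) x + (x + 1) - (P.card : ℤ)).toNat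

theorem pp_cast (P : Finset ℕ) (x : ℕ) : (pp P x : ℤ) = tEnum (TT P) x + (x + 1) - P.card := by
  have h1 := tE_LZ P x
  have h2 := LZ_le P (tEnum (TT P) x)
  unfold pp
  omega

theorem pp_rem (P : Finset ℕ) (x y : ℕ) :
    (y + 1 = pp P x ∧ pp P (x + 1) < pp P x) ↔
      (tEnum (TT P) x - 1 ∉ TT P ∧ (y : ℤ) = tEnum (TT P) x + x - P.card) := by
  have h1 := pp_cast P x
  have h2 := pp_cast P (x + 1)
  have h3 := tE1 P x
  have h4 : tEnum (TT P) (x + 1) < tEnum (TT P) x := h3.1.2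
  push_cast at h2
  constructor
  · rintro ⟨h, h'⟩
    refine ⟨fun h5 => ?_, by omega⟩
    have : _ ≤ _ := h3.2 ⟨h5, by simp⟩
    omega
  · rintro ⟨h, h'⟩
    refine ⟨by omega, ?_⟩
    have : tEnum (TT P) (x + 1) ≠ tEnum (TT P) x - 1 := by
      intro h5; rw [← h5] at h; exact h h3.1.1
    omega

theorem pp_add (P : Finset ℕ) (x y : ℕ) :
    (y = pp P x ∧ (x = 0 ∨ pp P x < pp P (x - 1))) ↔
      (tEnum (TT P) x + 1 ∉ TT P ∧ (y : ℤ) = tEnum (TT P) x + x + 1 - P.card) := by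
  have h1 := pp_cast P x
  cases x with
  | zero =>
    have h3 := tE0 P
    constructor
    · rintro ⟨h, -⟩
      refine ⟨fun h5 => ?_, by push_cast at *; omega⟩
      have := h3.2 h5
      omega
    · rintro ⟨h, h'⟩
      exact ⟨by push_cast at *; omega, Or.inl rfl⟩
  | succ x =>
    have h2 := pp_cast P x
    have h3 := tE1 P x
    have h4 : tEnum (TT P) (x + 1) < tEnum (TT P) x := h3.1.2
    push_cast at h1
    simp only [Nat.succ_ne_zero, false_or, Nat.add_sub_cancel]
    constructor
    · rintro ⟨h, h'⟩
      refine ⟨fun h5 => ?_, by push_cast; omega⟩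
      have : _ ≤ _ := h3.2 ⟨h5, by simp; omega⟩
      omega
    · rintro ⟨h, h'⟩
      push_cast at h'
      refine ⟨by omega, ?_⟩
      have : tEnum (TT P) (x + 1) + 1 ≠ tEnum (TT P) x := by
        intro h5; rw [h5] at h; exact h (tE_mem P x)
      omega

theorem TT_nat (P : Finset ℕ) (n : ℕ) : (n : ℤ) ∈ TT P ↔ n ∈ P := by
  simp [TT]

theorem pp_mv (P : Finset ℕ) (i x0 : ℕ) (h : Rm i P) (hx : tEnum (TT P) x0 = (i : ℤ) + 1) (x : ℕ) :
    pp (mv i P) x = if x = x0 then pp P x - 1 else pp P x := by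
  have hm : ∀ z : ℤ, z ∈ TT (mv i P) ↔ z = i ∨ (z ≠ i + 1 ∧ z ∈ TT P) := by
    intro z
    rcases lt_or_ge z 0 with hz | hz
    · have := TT_neg P z hz
      have := TT_neg (mv i P) z hz
      constructor
      · intro _; right; exact ⟨by omega, ‹_›⟩
      · intro _; assumption
    · obtain ⟨n, rfl⟩ := Int.eq_ofNat_of_zero_le hz
      rw [TT_nat, TT_nat, mem_mv]
      norm_cast
  have ha : StrictAnti (tEnum (TT P)) := strictAnti_nat_of_succ_lt (tE_lt P)
  have hi : (i : ℤ) ∉ TT P := by rw [TT_nat]; exact h.2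
  have key := tE_uniq (mv i P) (fun x => if x = x0 then (i : ℤ) else tEnum (TT P) x) ?_ ?_ ?_
  · have h1 := pp_cast (mv i P) x
    rw [key x, card_mv i P h] at h1
    have h2 := pp_cast P x
    by_cases hxx : x = x0
    · subst hxx
      simp only [if_true] at h1 ⊢
      omega
    · simp only [if_neg hxx] at h1 ⊢
      omega
  · intro x
    have hl := tE_lt P x
    have hne : tEnum (TT P) (x + 1) ≠ i := fun h' => hi (h' ▸ tE_mem P (x + 1))
    by_cases h1 : x + 1 = x0
    · rw [if_pos h1, if_neg (by omega)]
      rw [h1, hx] at hl; omega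
    · rw [if_neg h1]
      by_cases h2 : x = x0
      · rw [if_pos h2]; rw [h2, hx] at hl
        rw [h2] at hne ⊢; omega
      · rw [if_neg h2]; exact hl
  · intro x
    rw [hm]
    by_cases h2 : x = x0
    · left; rw [if_pos h2]
    · right; rw [if_neg h2]
      refine ⟨fun h3 => h2 (ha.injective (h3.trans hx.symm)), tE_mem P x⟩
  · intro z hz
    rw [hm] at hz
    rcases hz with rfl | ⟨hz, hz'⟩
    · exact ⟨x0, by simp⟩
    · obtain ⟨x, rfl⟩ := tE_surj P z hz'
      refine ⟨x, ?_⟩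
      rw [if_neg]
      rintro rfl
      exact hz hx

theorem pp_zero (P : Finset ℕ) : (∀ x, pp P x = 0) ↔ ∀ i, ¬ Rm i P := by
  constructor
  · intro h i hi
    obtain ⟨x, hx⟩ := tE_surj P ((i : ℤ) + 1) (by
      have := (TT_nat P (i+1)).2 hi.1; push_cast at this; exact this)
    have := (pp_rem P x (pp P x - 1)).2 ⟨by
      rw [hx]; simp only [add_sub_cancel_right]; rw [TT_nat]; exact hi.2, by
      have h1 := pp_cast P x
      have h2 := tE_LZ P x
      rw [hx, add_comm (i:ℤ), add_comm 1 (i:ℤ), LZ_succ, if_neg (by rw [TT_nat]; exact hi.2)] at h2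
      have := LZ_le P (i : ℤ)
      omega⟩
    have := h x
    omega
  · intro h x
    have h1 := pp_cast P x
    have h2 := tE_LZ P x
    have h3 := tE_mem P x
    set t := tEnum (TT P) x
    have : LZ P t = t := by
      unfold LZ
      split_ifs with h4
      · rfl
      · rw [LJ_L P h]
        have := (LJ_mem P h t.toNat).1 (by rcases h3 with h3 | h3; omega; exact h3.2)
        omega
    omega

end

section

/-- The row `s` of a matrix as a finite set of positions. -/
def row {e : ℕ} (M : Fin 3 → Fin e → Bool) (s : Fin 3) : Finset ℕ :=
  (Finset.univ.filter (fun c => M s c = true)).image Fin.val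

theorem mem_row {e : ℕ} (M : Fin 3 → Fin e → Bool) (s : Fin 3) (n : ℕ) :
    n ∈ row M s ↔ ∃ h : n < e, M s ⟨n, h⟩ = true := by
  simp only [row, Finset.mem_image, Finset.mem_filter, Finset.mem_univ, true_and]
  constructor
  · rintro ⟨c, hc, rfl⟩; exact ⟨c.2, hc⟩
  · rintro ⟨h, h'⟩; exact ⟨_, h', rfl⟩

theorem rank_zero {e : ℕ} (i : Fin e) : rank (fun _ => 0) i = i := by
  apply Fin.ext
  simp only [rank, prec, lt_irrefl, false_or, true_and]
  have : Finset.univ.filter (fun j => j < i) = Finset.Iio i := by ext; simp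
  rw [this, Fin.card_Iio]

theorem nsum_row {e : ℕ} (M : Fin 3 → Fin e → Bool) (s : Fin 3) :
    nsum (fun _ => 0) M s = (row M s).card := by
  simp only [nsum, beads, rank_zero, zero_add]
  rw [row, Finset.card_image_of_injective _ Fin.val_injective, Finset.card_filter]

theorem Tset_row {e : ℕ} (M : Fin 3 → Fin e → Bool) (s : Fin 3) :
    Tset (fun _ => 0) M s = TT (row M s) := by
  ext z
  simp only [Tset, TT, Set.mem_ofPred_eq, beads, rank_zero, zero_add, mem_row]
  refine or_congr Iff.rfl (and_congr Iff.rfl ?_)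
  constructor
  · rintro ⟨h, h'⟩
    split_ifs at h' with hM
    · have he : 0 < e := by omega
      have hz : z.toNat < e := by
        by_contra hc
        have := (Nat.one_le_div_iff he).2 (not_lt.1 hc)
        omega
      refine ⟨hz, ?_⟩
      rw [← hM]; congr 1; apply Fin.ext; exact (Nat.mod_eq_of_lt hz).symm
    · exact absurd h' (Nat.not_lt_zero _)
  · rintro ⟨h, h'⟩
    have h1 := Nat.mod_eq_of_lt h
    refine ⟨by omega, ?_⟩
    have h2 : (⟨z.toNat % e, by omega⟩ : Fin e) = ⟨z.toNat, h⟩ := Fin.ext h1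
    rw [h2, if_pos h', Nat.div_eq_of_lt h]
    omega

theorem PtPart_row {e : ℕ} (M : Fin 3 → Fin e → Bool) :
    PtPart (fun _ => 0) M = fun s => pp (row M s) := by
  funext s p
  simp only [PtPart, pp, Tset_row, nsum_row]

theorem PtCharge_row {e : ℕ} (M : Fin 3 → Fin e → Bool) :
    PtCharge (fun _ => 0) M = fun s => ((row M s).card : ZMod e) := by
  funext s
  simp only [PtCharge, nsum_row]

theorem TT_ub {e : ℕ} (P : Finset ℕ) (hP : ∀ x ∈ P, x < e) (z : ℤ) (hz : z ∈ TT P) : z < e := by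
  rcases hz with hz | ⟨hz, hz'⟩
  · omega
  · have := hP _ hz'; omega

theorem zmod_eq {e : ℕ} (a b : ℤ) (ha : 0 ≤ a) (hb : 0 < b) (ha' : a ≤ e) (hb' : b < e)
    (h : (a : ZMod e) = (b : ZMod e)) : a = b := by
  rw [ZMod.intCast_eq_intCast_iff] at h
  rcases lt_or_eq_of_le ha' with h1 | h1
  · have := h.eq
    rwa [Int.emod_eq_of_lt ha h1, Int.emod_eq_of_lt hb.le hb'] at this
  · have := h.eq
    rw [h1, Int.emod_self, Int.emod_eq_of_lt hb.le hb'] at this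
    omega

/-- Position of the part with beta-number `z`. -/
def pos (P : Finset ℕ) (z : ℤ) : ℕ := if h : ∃ x, tEnum (TT P) x = z then h.choose else 0

theorem pos_spec (P : Finset ℕ) (z : ℤ) (h : z ∈ TT P) : tEnum (TT P) (pos P z) = z := by
  have := tE_surj P z h
  rw [pos, dif_pos this]; exact this.choose_spec

theorem tE_inj (P : Finset ℕ) (x x' : ℕ) (h : tEnum (TT P) x = tEnum (TT P) x') : x = x' :=
  (strictAnti_nat_of_succ_lt (tE_lt P)).injective h

theorem rem_bound {e : ℕ} (P : Finset ℕ) (hP : ∀ x ∈ P, x < e) (x : ℕ)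
    (h : tEnum (TT P) x - 1 ∉ TT P) : 1 ≤ tEnum (TT P) x ∧ tEnum (TT P) x < e := by
  refine ⟨?_, TT_ub P hP _ (tE_mem P x)⟩
  by_contra h'
  exact h (TT_neg P _ (by omega))

theorem add_bound {e : ℕ} (P : Finset ℕ) (hP : ∀ x ∈ P, x < e) (x : ℕ)
    (h : tEnum (TT P) x + 1 ∉ TT P) : 0 ≤ tEnum (TT P) x + 1 ∧ tEnum (TT P) x + 1 ≤ e := by
  refine ⟨?_, by have := TT_ub P hP _ (tE_mem P x); omega⟩
  by_contra h'
  exact h (TT_neg P _ (by omega))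

def nR (P : Finset ℕ) (i : ℕ) : ℕ × ℕ := (pos P (i + 1), pp P (pos P (i + 1)) - 1)
def nA (P : Finset ℕ) (i : ℕ) : ℕ × ℕ := (pos P i, pp P (pos P i))

variable {e : ℕ} {R : Fin 3 → Finset ℕ}

theorem node_rem (hR : ∀ s, ∀ x ∈ R s, x < e) (i : ℕ) (hi : i + 1 < e) (C : Node 3) :
    (Removable (fun s => pp (R s)) C ∧ res (fun s => ((R s).card : ZMod e)) C = ((i + 1 : ℕ) : ZMod e)) ↔
      (Rm i (R C.1) ∧ C.2 = nR (R C.1) i) := by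
  obtain ⟨s, x, y⟩ := C
  simp only [Removable, res]
  rw [pp_rem]
  set P := R s
  constructor
  · rintro ⟨⟨h1, h2⟩, h3⟩
    have hb := rem_bound P (hR s) x h1
    have h4 : ((tEnum (TT P) x : ℤ) : ZMod e) = (((i : ℤ) + 1 : ℤ) : ZMod e) := by
      have h5 : tEnum (TT P) x = P.card - x + y := by omega
      rw [h5]; push_cast; push_cast at h3; exact h3
    have h5 := zmod_eq _ _ (by omega) (by omega) (by omega) (by omega) h4
    have hm := tE_mem P x
    have hr : Rm i P := by
      refine ⟨?_, ?_⟩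
      · rw [← TT_nat]; push_cast; rw [← h5]; exact hm
      · rw [← TT_nat]; rw [h5] at h1; simpa using h1
    refine ⟨hr, ?_⟩
    have hp : x = pos P (i + 1) := tE_inj P _ _ (by rw [pos_spec P _ (h5 ▸ hm), h5])
    rw [nR, ← hp]
    have := pp_cast P x
    ext <;> simp
    omega
  · rintro ⟨hr, h⟩
    rw [nR, Prod.mk.injEq] at h
    obtain ⟨h1, h2⟩ := h
    have hm : ((i : ℤ) + 1) ∈ TT P := by
      have := (TT_nat P (i + 1)).2 hr.1; push_cast at this; exact this
    have h3 : tEnum (TT P) x = i + 1 := by rw [h1]; exact pos_spec P _ hm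
    have h4 : tEnum (TT P) x - 1 ∉ TT P := by
      rw [h3]; simp only [add_sub_cancel_right]; rw [TT_nat]; exact hr.2
    rw [← h1] at h2
    have h5 := pp_cast P x
    have h6 := pp_cast P (x + 1)
    have h7 : tEnum (TT P) (x + 1) < tEnum (TT P) x := tE_lt P x
    have h8 : tEnum (TT P) (x + 1) ≠ tEnum (TT P) x - 1 := fun h9 => h4 (h9 ▸ tE_mem P (x + 1))
    push_cast at h6
    have h9 : (y : ℤ) = tEnum (TT P) x + x - P.card := by omega
    refine ⟨⟨h4, h9⟩, ?_⟩
    have h10 : ((P.card : ℤ) - (x : ℤ) + (y : ℤ)) = i + 1 := by omega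
    have := congrArg (Int.cast : ℤ → ZMod e) h10
    push_cast at this ⊢
    exact this

theorem node_add (hR : ∀ s, ∀ x ∈ R s, x < e) (i : ℕ) (hi : i + 1 < e) (C : Node 3) :
    (Addable (fun s => pp (R s)) C ∧ res (fun s => ((R s).card : ZMod e)) C = ((i + 1 : ℕ) : ZMod e)) ↔
      (Ad i (R C.1) ∧ C.2 = nA (R C.1) i) := by
  obtain ⟨s, x, y⟩ := C
  simp only [Addable, res]
  rw [pp_add]
  set P := R s
  constructor
  · rintro ⟨⟨h1, h2⟩, h3⟩
    have hb := add_bound P (hR s) x h1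
    have h4 : ((tEnum (TT P) x + 1 : ℤ) : ZMod e) = (((i : ℤ) + 1 : ℤ) : ZMod e) := by
      have h5 : tEnum (TT P) x + 1 = P.card - x + y := by omega
      rw [h5]; push_cast; push_cast at h3; exact h3
    have h5 := zmod_eq _ _ (by omega) (by omega) (by omega) (by omega) h4
    have h5 : tEnum (TT P) x = i := by omega
    have hm := tE_mem P x
    have hr : Ad i P := by
      refine ⟨?_, ?_⟩
      · rw [← TT_nat]; rw [← h5]; exact hm
      · rw [← TT_nat]; rw [h5] at h1; push_cast; exact h1
    refine ⟨hr, ?_⟩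
    have hp : x = pos P i := tE_inj P _ _ (by rw [pos_spec P _ (h5 ▸ hm), h5])
    rw [nA, ← hp]
    have := pp_cast P x
    ext <;> simp
    omega
  · rintro ⟨hr, h⟩
    rw [nA, Prod.mk.injEq] at h
    obtain ⟨h1, h2⟩ := h
    have hm : (i : ℤ) ∈ TT P := (TT_nat P i).2 hr.1
    have h3 : tEnum (TT P) x = i := by rw [h1]; exact pos_spec P _ hm
    have h4 : tEnum (TT P) x + 1 ∉ TT P := by
      rw [h3]; have := mt (TT_nat P (i + 1)).1 hr.2; push_cast at this; exact this
    rw [← h1] at h2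
    have h5 := pp_cast P x
    have h9 : (y : ℤ) = tEnum (TT P) x + x + 1 - P.card := by omega
    refine ⟨⟨h4, h9⟩, ?_⟩
    have h10 : ((P.card : ℤ) - (x : ℤ) + (y : ℤ)) = i + 1 := by omega
    have := congrArg (Int.cast : ℤ → ZMod e) h10
    push_cast at this ⊢
    exact this

theorem node_rem_res (hR : ∀ s, ∀ x ∈ R s, x < e) (C : Node 3)
    (h : Removable (fun s => pp (R s)) C) :
    ∃ i, i + 1 < e ∧ res (fun s => ((R s).card : ZMod e)) C = ((i + 1 : ℕ) : ZMod e) := by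
  obtain ⟨s, x, y⟩ := C
  simp only [Removable] at h
  rw [pp_rem] at h
  have hb := rem_bound (R s) (hR s) x h.1
  refine ⟨(tEnum (TT (R s)) x - 1).toNat, by omega, ?_⟩
  have h10 : (((R s).card : ℤ) - (x : ℤ) + (y : ℤ)) = ((tEnum (TT (R s)) x - 1).toNat + 1 : ℕ) := by
    omega
  have := congrArg (Int.cast : ℤ → ZMod e) h10
  simp only [res]
  push_cast at this ⊢
  exact this

/-- normality, row by row -/
def Nm (Rp Ap : Fin 3 → Prop) (s : Fin 3) : Prop :=
  Rp s ∧ ∀ t, s < t → Ap t → ∃ c, s < c ∧ c < t ∧ Rp c ∧ ∀ d, s < d → d < t → ¬ Ap d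

theorem normal_abs {a : Fin 3 → ZMod e} {lam : Fin 3 → ℕ → ℕ} {ρ : ZMod e} {Rp Ap : Fin 3 → Prop}
    {nr na : Fin 3 → ℕ × ℕ}
    (hr : ∀ C : Node 3, (Removable lam C ∧ res a C = ρ) ↔ (Rp C.1 ∧ C.2 = nr C.1))
    (ha : ∀ C : Node 3, (Addable lam C ∧ res a C = ρ) ↔ (Ap C.1 ∧ C.2 = na C.1))
    (ex : ∀ s, Rp s → ¬ Ap s) (C : Node 3) :
    (Normal a lam C ∧ res a C = ρ) ↔ (Nm Rp Ap C.1 ∧ C.2 = nr C.1) := by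
  have abv : ∀ A B : Node 3, A.1 ≠ B.1 → (NodeAbove A B ↔ A.1 < B.1) := by
    intro A B h; simp [NodeAbove, h]
  -- between two rows there is at most one row
  have mid : ∀ s t c d : Fin 3, s < c → c < t → s < d → d < t → c = d := by decide
  constructor
  · rintro ⟨⟨h1, h2⟩, h3⟩
    obtain ⟨h4, h5⟩ := (hr C).1 ⟨h1, h3⟩
    refine ⟨⟨h4, fun t ht hat => ?_⟩, h5⟩
    obtain ⟨hB1, hB2⟩ := (ha (t, na t)).2 ⟨hat, rfl⟩
    have := h2 (t, na t) hB1 (hB2.trans h3.symm) (Or.inl ht)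
    obtain ⟨⟨c, hc⟩, hcm⟩ := Set.nonempty_of_ncard_ne_zero (Nat.ne_of_gt (Nat.zero_lt_of_lt this))
    obtain ⟨q1, q2, q3, q4⟩ := hcm
    obtain ⟨q5, q6⟩ := (hr _).1 ⟨q1, q2.trans h3⟩
    simp only at q5 q6
    have hcs : C.1 < c := by
      rcases q3 with q3 | ⟨q3, q3'⟩
      · exact q3
      · simp only at q3 q3'
        rw [q6, h5, q3] at q3'; exact absurd q3' (lt_irrefl _)
    have hct : c < t := by
      rcases q4 with q4 | ⟨q4, q4'⟩
      · exact q4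
      · simp only at q4; subst q4; exact absurd hat (ex _ q5)
    refine ⟨c, hcs, hct, q5, fun d hd hd' had => ?_⟩
    rw [mid _ _ c d hcs hct hd hd'] at q5
    exact ex d q5 had
  · rintro ⟨⟨h1, h2⟩, h3⟩
    obtain ⟨h4, h5⟩ := (hr C).2 ⟨h1, h3⟩
    refine ⟨⟨h4, fun B hB hB' hab => ?_⟩, h5⟩
    obtain ⟨b1, b2⟩ := (ha B).1 ⟨hB, hB'.trans h5⟩
    have hne : C.1 ≠ B.1 := by
      intro h; rw [← h] at b1; exact ex _ h1 b1
    rw [abv _ _ hne] at hab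
    obtain ⟨c, c1, c2, c3, c4⟩ := h2 B.1 hab b1
    have e1 : {C_1 : Node 3 | Addable lam C_1 ∧ res a C_1 = res a C ∧ NodeAbove C C_1 ∧
        NodeAbove C_1 B} = ∅ := by
      ext D
      simp only [Set.mem_ofPred_eq, Set.mem_empty_iff_false, iff_false]
      rintro ⟨d1, d2, d3, d4⟩
      obtain ⟨d5, d6⟩ := (ha D).1 ⟨d1, d2.trans h5⟩
      have hCD : C.1 ≠ D.1 := by
        intro h; rw [← h] at d5; exact ex _ h1 d5
      have hDB : D.1 < B.1 := by
        rcases d4 with d4 | ⟨d4, d4'⟩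
        · exact d4
        · rw [d6, b2, d4] at d4'; exact absurd d4' (lt_irrefl _)
      rw [abv _ _ hCD] at d3
      exact c4 _ d3 hDB d5
    have e2 : {C_1 : Node 3 | Removable lam C_1 ∧ res a C_1 = res a C ∧ NodeAbove C C_1 ∧
        NodeAbove C_1 B} = {(c, nr c)} := by
      ext D
      simp only [Set.mem_ofPred_eq, Set.mem_singleton_iff]
      constructor
      · rintro ⟨d1, d2, d3, d4⟩
        obtain ⟨d5, d6⟩ := (hr D).1 ⟨d1, d2.trans h5⟩
        have hDB : D.1 ≠ B.1 := by
          intro h; rw [h] at d5; exact ex _ d5 b1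
        have hCD : C.1 < D.1 := by
          rcases d3 with d3 | ⟨d3, d3'⟩
          · exact d3
          · rw [d6, h3, d3] at d3'; exact absurd d3' (lt_irrefl _)
        rw [abv _ _ hDB] at d4
        have := mid _ _ c D.1 c1 c2 hCD d4
        rw [this]; exact Prod.ext rfl d6
      · rintro rfl
        obtain ⟨d1, d2⟩ := (hr (c, nr c)).2 ⟨c3, rfl⟩
        exact ⟨d1, d2.trans h5.symm, Or.inl c1, Or.inl c2⟩
    rw [e1, e2]; simp

theorem good_abs {a : Fin 3 → ZMod e} {lam : Fin 3 → ℕ → ℕ} {ρ : ZMod e} {Rp Ap : Fin 3 → Prop}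
    {nr na : Fin 3 → ℕ × ℕ}
    (hr : ∀ C : Node 3, (Removable lam C ∧ res a C = ρ) ↔ (Rp C.1 ∧ C.2 = nr C.1))
    (ha : ∀ C : Node 3, (Addable lam C ∧ res a C = ρ) ↔ (Ap C.1 ∧ C.2 = na C.1))
    (ex : ∀ s, Rp s → ¬ Ap s) (C : Node 3) :
    (Good a lam C ∧ res a C = ρ) ↔ ((Nm Rp Ap C.1 ∧ ∀ t, t < C.1 → ¬ Nm Rp Ap t) ∧ C.2 = nr C.1) := by
  have hN := normal_abs hr ha ex
  constructor
  · rintro ⟨⟨h1, h2⟩, h3⟩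
    obtain ⟨h4, h5⟩ := (hN C).1 ⟨h1, h3⟩
    refine ⟨⟨h4, fun t ht hn => ?_⟩, h5⟩
    obtain ⟨b1, b2⟩ := (hN (t, nr t)).2 ⟨hn, rfl⟩
    rcases h2 _ b1 (b2.trans h3.symm) (fun h => by rw [← h] at ht; exact lt_irrefl _ ht) with h | ⟨h, -⟩
    · exact lt_asymm h ht
    · exact ht.ne h.symm
  · rintro ⟨⟨h1, h2⟩, h3⟩
    obtain ⟨h4, h5⟩ := (hN C).2 ⟨h1, h3⟩
    refine ⟨⟨h4, fun B hB hB' hne => Or.inl ?_⟩, h5⟩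
    obtain ⟨b1, b2⟩ := (hN B).1 ⟨hB, hB'.trans h5⟩
    rcases lt_trichotomy C.1 B.1 with h | h | h
    · exact h
    · exact absurd (Prod.ext h.symm (by rw [b2, h3, h])) hne
    · exact absurd b1 (h2 _ h)

theorem Nm2 (Rp Ap : Fin 3 → Prop) : Nm Rp Ap 2 ↔ Rp 2 := by
  simp [Nm, Fin.forall_fin_succ]

theorem Nm1 (Rp Ap : Fin 3 → Prop) : Nm Rp Ap 1 ↔ Rp 1 ∧ ¬ Ap 2 := by
  unfold Nm
  refine and_congr Iff.rfl ⟨fun h h2 => ?_, fun h t ht hat => ?_⟩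
  · obtain ⟨c, c1, c2, -⟩ := h 2 (by decide) h2
    revert c; decide
  · have : t = 2 := by omega
    subst this; exact absurd hat h

theorem Nm0 (Rp Ap : Fin 3 → Prop) : Nm Rp Ap 0 ↔ Rp 0 ∧ ¬ Ap 1 ∧ (Ap 2 → Rp 1) := by
  unfold Nm
  refine and_congr Iff.rfl ⟨fun h => ⟨fun h2 => ?_, fun h2 => ?_⟩, ?_⟩
  · obtain ⟨c, c1, c2, -⟩ := h 1 (by decide) h2
    revert c; decide
  · obtain ⟨c, c1, c2, c3, -⟩ := h 2 (by decide) h2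
    have : c = 1 := by omega
    exact this ▸ c3
  · rintro ⟨h1, h2⟩ t ht hat
    have : t = 1 ∨ t = 2 := by omega
    rcases this with rfl | rfl
    · exact absurd hat h1
    · refine ⟨1, by decide, by decide, h2 hat, fun d hd hd' had => ?_⟩
      have : d = 1 := by omega
      exact h1 (this ▸ had)

end

section

variable {e : ℕ} 

theorem removeNode_pp (R : Fin 3 → Finset ℕ) (s : Fin 3) (i : ℕ) (h : Rm i (R s)) :
    removeNode (fun s => pp (R s)) (s, nR (R s) i) =
      fun t => pp (Function.update R s (mv i (R s)) t) := by
  funext t x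
  simp only [removeNode, nR]
  have hp := pos_spec (R s) ((i : ℤ) + 1) (by
    have := (TT_nat (R s) (i + 1)).2 h.1; push_cast at this; exact this)
  by_cases ht : t = s
  · subst ht
    rw [Function.update_self, pp_mv _ i _ h hp]
    simp
  · rw [Function.update_of_ne ht]; simp [ht]

theorem card_upd (R : Fin 3 → Finset ℕ) (s : Fin 3) (i : ℕ) (h : Rm i (R s)) :
    (fun t => ((Function.update R s (mv i (R s)) t).card : ZMod e)) = fun t => ((R t).card : ZMod e) := by
  funext t
  by_cases ht : t = s
  · subst ht; rw [Function.update_self, card_mv i _ h]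
  · rw [Function.update_of_ne ht]

theorem bound_upd (R : Fin 3 → Finset ℕ) (hR : ∀ s, ∀ x ∈ R s, x < e) (s : Fin 3) (i : ℕ)
    (h : Rm i (R s)) : ∀ t, ∀ x ∈ Function.update R s (mv i (R s)) t, x < e := by
  intro t x hx
  by_cases ht : t = s
  · subst ht; rw [Function.update_self, mem_mv] at hx
    have := hR _ _ h.1
    rcases hx with rfl | ⟨-, hx⟩
    · omega
    · exact hR _ _ hx
  · rw [Function.update_of_ne ht] at hx; exact hR _ _ hx

theorem good_iff (R : Fin 3 → Finset ℕ) (hR : ∀ s, ∀ x ∈ R s, x < e) (i : ℕ) (hi : i + 1 < e)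
    (C : Node 3) :
    (Good (fun s => ((R s).card : ZMod e)) (fun s => pp (R s)) C ∧
      res (fun s => ((R s).card : ZMod e)) C = ((i + 1 : ℕ) : ZMod e)) ↔
    ((Nm (fun s => Rm i (R s)) (fun s => Ad i (R s)) C.1 ∧
      ∀ t, t < C.1 → ¬ Nm (fun s => Rm i (R s)) (fun s => Ad i (R s)) t) ∧ C.2 = nR (R C.1) i) :=
  good_abs (nr := fun s => nR (R s) i) (na := fun s => nA (R s) i) (node_rem hR i hi) (node_add hR i hi) (fun s (h : Rm i (R s)) (h' : Ad i (R s)) => h.2 h'.1) C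

/-- One step at the level of rows. -/
theorem KK_step (R : Fin 3 → Finset ℕ) (s : Fin 3) (i : ℕ)
    (h1 : Nm (fun s => Rm i (R s)) (fun s => Ad i (R s)) s)
    (h2 : ∀ t, t < s → ¬ Nm (fun s => Rm i (R s)) (fun s => Ad i (R s)) t)
    (h : KK (Function.update R s (mv i (R s)) 0) (Function.update R s (mv i (R s)) 1)
      (Function.update R s (mv i (R s)) 2)) : KK (R 0) (R 1) (R 2) := by
  have hs : s = 0 ∨ s = 1 ∨ s = 2 := by omega
  rcases hs with rfl | rfl | rfl
  · rw [Nm0] at h1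
    exact KK.s0 i _ _ _ h1.1 h1.2.1 h1.2.2 (by simpa using h)
  · rw [Nm1] at h1
    have h0 := h2 0 (by decide)
    rw [Nm0] at h0
    refine KK.s1 i _ _ _ h1.1 h1.2 (fun h3 => h0 ⟨h3, fun h4 => h1.1.2 h4.1, fun _ => h1.1⟩) (by simpa using h)
  · rw [Nm2] at h1
    have h0 := h2 0 (by decide)
    have h01 := h2 1 (by decide)
    rw [Nm0] at h0
    rw [Nm1] at h01
    have h5 : ¬ Ad i (R 2) := fun h4 => h1.2 h4.1
    refine KK.s2 i _ _ _ h1 (fun h3 => h01 ⟨h3, h5⟩) (fun h3 => ?_) (by simpa using h)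
    by_contra h6
    exact h0 ⟨h3, h6, fun h7 => absurd h7 h5⟩

theorem IsK_fwd (a : Fin 3 → ZMod e) (lam : Fin 3 → ℕ → ℕ) (h : IsKleshchev a lam) :
    ∀ R : Fin 3 → Finset ℕ, (∀ s, ∀ x ∈ R s, x < e) → a = (fun s => ((R s).card : ZMod e)) →
      lam = (fun s => pp (R s)) → KK (R 0) (R 1) (R 2) := by
  induction h with
  | empty =>
    intro R hR ha hl
    have : ∀ s, ∀ i, ¬ Rm i (R s) := fun s => (pp_zero (R s)).1 (fun x => (congrFun (congrFun hl s) x).symm)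
    exact KK.base _ _ _ (this 0) (this 1) (this 2)
  | step lam A hA h ih =>
    intro R hR ha hl
    subst ha hl
    obtain ⟨i, hi, hres⟩ := node_rem_res hR A hA.1.1
    obtain ⟨⟨h1, h2⟩, h3⟩ := (good_iff R hR i hi A).1 ⟨hA, hres⟩
    have hAe : A = (A.1, nR (R A.1) i) := Prod.ext rfl h3
    have hr : Rm i (R A.1) := h1.1
    refine KK_step R A.1 i h1 h2 (ih _ (bound_upd R hR A.1 i hr) (card_upd R A.1 i hr).symm ?_)
    rw [← removeNode_pp R A.1 i hr, ← hAe]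

theorem IsK_step (R : Fin 3 → Finset ℕ) (hR : ∀ s, ∀ x ∈ R s, x < e) (s : Fin 3) (i : ℕ)
    (h1 : Nm (fun s => Rm i (R s)) (fun s => Ad i (R s)) s)
    (h2 : ∀ t, t < s → ¬ Nm (fun s => Rm i (R s)) (fun s => Ad i (R s)) t)
    (h : (∀ t, ∀ x ∈ Function.update R s (mv i (R s)) t, x < e) →
      IsKleshchev (fun t => ((Function.update R s (mv i (R s)) t).card : ZMod e))
      (fun t => pp (Function.update R s (mv i (R s)) t))) :
    IsKleshchev (fun s => ((R s).card : ZMod e)) (fun s => pp (R s)) := by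
  have hr : Rm i (R s) := h1.1
  obtain ⟨g1, g2⟩ := (good_iff R hR i (hR s _ hr.1) (s, nR (R s) i)).2 ⟨⟨h1, h2⟩, rfl⟩
  refine IsKleshchev.step _ _ g1 ?_
  have := h (bound_upd R hR s i hr)
  rwa [card_upd R s i hr, ← removeNode_pp R s i hr] at this

theorem IsK_bwd (P Q T : Finset ℕ) (h : KK P Q T) :
    ∀ R : Fin 3 → Finset ℕ, (∀ s, ∀ x ∈ R s, x < e) → R 0 = P → R 1 = Q → R 2 = T →
      IsKleshchev (fun s => ((R s).card : ZMod e)) (fun s => pp (R s)) := by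
  induction h with
  | base P Q T hP hQ hT =>
    rintro R hR rfl rfl rfl
    have : (fun s => pp (R s)) = fun _ _ => 0 := by
      funext s x
      have hs : s = 0 ∨ s = 1 ∨ s = 2 := by omega
      rcases hs with rfl | rfl | rfl
      · exact (pp_zero _).2 hP x
      · exact (pp_zero _).2 hQ x
      · exact (pp_zero _).2 hT x
    rw [this]; exact IsKleshchev.empty
  | s0 i P Q T h0 h1 h2 h ih =>
    rintro R hR rfl rfl rfl
    refine IsK_step R hR 0 i ((Nm0 _ _).2 ⟨h0, h1, h2⟩) (fun t ht => by omega) (fun hb => ih _ hb ?_ ?_ ?_) <;> simp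
  | s1 i P Q T h0 h1 h2 h ih =>
    rintro R hR rfl rfl rfl
    refine IsK_step R hR 1 i ((Nm1 _ _).2 ⟨h0, h1⟩) (fun t ht => ?_) (fun hb => ih _ hb ?_ ?_ ?_)
    · have : t = 0 := by omega
      subst this; rw [Nm0]; exact fun h3 => h2 h3.1
    all_goals simp
  | s2 i P Q T h0 h1 h2 h ih =>
    rintro R hR rfl rfl rfl
    refine IsK_step R hR 2 i ((Nm2 _ _).2 h0) (fun t ht => ?_) (fun hb => ih _ hb ?_ ?_ ?_)
    · have : t = 0 ∨ t = 1 := by omega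
      rcases this with rfl | rfl
      · rw [Nm0]; exact fun h3 => h3.2.1 (h2 h3.1)
      · rw [Nm1]; exact fun h3 => h1 h3.1
    all_goals simp

theorem IsK_iff (M : Fin 3 → Fin e → Bool) :
    IsKleshchev (PtCharge (fun _ => 0) M) (PtPart (fun _ => 0) M) ↔
      KK (row M 0) (row M 1) (row M 2) := by
  have hb : ∀ s, ∀ x ∈ row M s, x < e := fun s x hx => ((mem_row M s x).1 hx).1
  rw [PtPart_row, PtCharge_row]
  exact ⟨fun h => IsK_fwd _ _ h (row M) hb rfl rfl, fun h => IsK_bwd _ _ _ h (row M) hb rfl rfl rfl⟩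

end

section

section cnt
variable {α : Type}

/-- The number of good configurations. -/
def cnt (A B : Finset α) (ga gb : α → Prop) (gc : α → α → Prop) : ℕ :=
  (A.filter ga).card + (B.filter gb).card + ((A ×ˢ B).filter (fun p => gc p.1 p.2)).card

theorem cnt_core (A B : Finset α) (ga gb : α → Prop) (gc : α → α → Prop) (a0 b0 : α)
    (ha : a0 ∈ A) (hb : b0 ∈ B)
    (h : ∀ k ∈ A, ∀ l ∈ B, ¬ gc k l ↔ (ga k ∧ l = b0) ∨ (k = a0 ∧ gb l))
    (hd : ¬ (ga a0 ∧ gb b0)) : cnt A B ga gb gc = A.card * B.card := by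
  have h1 := Finset.card_filter_add_card_filter_not (s := A ×ˢ B) (fun p => gc p.1 p.2)
  rw [Finset.card_product] at h1
  have h2 : (A ×ˢ B).filter (fun p => ¬ gc p.1 p.2) =
      (A.filter ga) ×ˢ {b0} ∪ {a0} ×ˢ (B.filter gb) := by
    ext ⟨k, l⟩
    simp only [Finset.mem_filter, Finset.mem_product, Finset.mem_union, Finset.mem_singleton]
    constructor
    · rintro ⟨⟨hk, hl⟩, hg⟩
      rcases (h k hk l hl).1 hg with ⟨h3, h4⟩ | ⟨h3, h4⟩
      · exact Or.inl ⟨⟨hk, h3⟩, h4⟩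
      · exact Or.inr ⟨h3, hl, h4⟩
    · rintro (⟨⟨hk, h3⟩, rfl⟩ | ⟨rfl, hl, h4⟩)
      · exact ⟨⟨hk, hb⟩, (h k hk _ hb).2 (Or.inl ⟨h3, rfl⟩)⟩
      · exact ⟨⟨ha, hl⟩, (h _ ha l hl).2 (Or.inr ⟨rfl, h4⟩)⟩
  have h3 : Disjoint ((A.filter ga) ×ˢ {b0}) ({a0} ×ˢ (B.filter gb)) := by
    rw [Finset.disjoint_left]
    rintro ⟨k, l⟩ h4 h5
    simp only [Finset.mem_filter, Finset.mem_product, Finset.mem_singleton] at h4 h5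
    obtain ⟨⟨-, h6⟩, rfl⟩ := h4
    obtain ⟨rfl, -, h7⟩ := h5
    exact hd ⟨h6, h7⟩
  rw [h2, Finset.card_union_of_disjoint h3, Finset.card_product, Finset.card_product,
    Finset.card_singleton, Finset.card_singleton] at h1
  unfold cnt
  omega

variable [LinearOrder α] {K : Finset α → Finset α → Finset α → Prop}

theorem ex_max (A : Finset α) (hA : A.Nonempty) : ∃ m ∈ A, ∀ x ∈ A, x ≤ m :=
  Finset.exists_max_image A (fun x => x) hA

theorem ex_min (A : Finset α) (hA : A.Nonempty) : ∃ m ∈ A, ∀ x ∈ A, m ≤ x :=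
  Finset.exists_min_image A (fun x => x) hA

variable {A B : Finset α} {ra rb : α → Fin 3 → Finset α} {rc : α → α → Fin 3 → Finset α}

theorem tot1 (hK : KP α K) (hAB : ∀ x, x ∈ A → x ∉ B) (hA : A.Nonempty) (hB : B.Nonempty)
    (Sa Ta Na Sb Tb Nb : α → Finset α) (Sc Tc Nc : α → α → Finset α)
    (fa : ∀ k ∈ A, F0 A B k (Sa k) (Ta k) (Na k))
    (fb : ∀ l ∈ B, F0 A B l (Sb l) (Tb l) (Nb l))
    (fc : ∀ k ∈ A, ∀ l ∈ B, F1 A B k l (Sc k l) (Tc k l) (Nc k l)) :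
    cnt A B (fun k => K (Sa k) (Ta k) (Na k)) (fun l => K (Sb l) (Tb l) (Nb l))
      (fun k l => K (Sc k l) (Tc k l) (Nc k l)) = A.card * B.card := by
  obtain ⟨a0, ha0, ha1⟩ := ex_max A hA
  obtain ⟨b0, hb0, hb1⟩ := ex_max B hB
  refine cnt_core A B _ _ _ a0 b0 ha0 hb0 (fun k hk l hl => ?_) ?_
  · rw [e1a hK hAB hk hB (fa k hk), e1b hK hAB hl hA (fb l hl), e1g hK hAB hk hl (fc k hk l hl)]
    grind
  · rw [e1a hK hAB ha0 hB (fa _ ha0), e1b hK hAB hb0 hA (fb _ hb0)]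
    grind

theorem tot4 (hK : KP α K) (hAB : ∀ x, x ∈ A → x ∉ B) (hA : A.Nonempty) (hB : B.Nonempty)
    (Sa Ta Na Sb Tb Nb : α → Finset α) (Sc Tc Nc : α → α → Finset α)
    (fa : ∀ k ∈ A, F0 A B k (Sa k) (Ta k) (Na k))
    (fb : ∀ l ∈ B, F0 A B l (Sb l) (Tb l) (Nb l))
    (fc : ∀ k ∈ A, ∀ l ∈ B, F1 A B k l (Sc k l) (Tc k l) (Nc k l)) :
    cnt A B (fun k => K (Ta k) (Sa k) (Na k)) (fun l => K (Tb l) (Sb l) (Nb l))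
      (fun k l => K (Tc k l) (Sc k l) (Nc k l)) = A.card * B.card := by
  obtain ⟨a0, ha0, ha1⟩ := ex_min A hA
  obtain ⟨b0, hb0, hb1⟩ := ex_max B hB
  refine cnt_core A B _ _ _ a0 b0 ha0 hb0 (fun k hk l hl => ?_) ?_
  · rw [e4a hK hAB hk hB (fa k hk), e4b hK hAB hl hA (fb l hl), e4g hK hAB hk hl (fc k hk l hl)]
    grind
  · rw [e4a hK hAB ha0 hB (fa _ ha0), e4b hK hAB hb0 hA (fb _ hb0)]
    grind

theorem tot3 (hK : KP α K) (hAB : ∀ x, x ∈ A → x ∉ B) (hA : A.Nonempty) (hB : B.Nonempty)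
    (Sa Ta Na Sb Tb Nb : α → Finset α) (Sc Tc Nc : α → α → Finset α)
    (fa : ∀ k ∈ A, F0 A B k (Sa k) (Ta k) (Na k))
    (fb : ∀ l ∈ B, F0 A B l (Sb l) (Tb l) (Nb l))
    (fc : ∀ k ∈ A, ∀ l ∈ B, F1 A B k l (Sc k l) (Tc k l) (Nc k l)) :
    cnt A B (fun k => K (Ta k) (Na k) (Sa k)) (fun l => K (Tb l) (Nb l) (Sb l))
      (fun k l => K (Tc k l) (Nc k l) (Sc k l)) = A.card * B.card := by
  obtain ⟨a0, ha0, ha1⟩ := ex_min A hA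
  obtain ⟨b0, hb0, hb1⟩ := ex_max B hB
  refine cnt_core A B _ _ _ a0 b0 ha0 hb0 (fun k hk l hl => ?_) ?_
  · rw [e3 hK hAB k (Or.inl hk) hA hB (fa k hk), e3 hK hAB l (Or.inr hl) hA hB (fb l hl),
      e3g hK hAB hk hl (fc k hk l hl)]
    grind
  · rw [e3 hK hAB a0 (Or.inl ha0) hA hB (fa _ ha0), e3 hK hAB b0 (Or.inr hb0) hA hB (fb _ hb0)]
    grind

end cnt

theorem cnt_swap {α : Type} (A B : Finset α) (ga gb : α → Prop) (gc : α → α → Prop) :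
    cnt A B ga gb gc = cnt B A gb ga (fun l k => gc k l) := by
  unfold cnt
  have : ((A ×ˢ B).filter (fun p => gc p.1 p.2)).card =
      ((B ×ˢ A).filter (fun p => gc p.2 p.1)).card := by
    apply Finset.card_bij' (fun p _ => (p.2, p.1)) (fun p _ => (p.2, p.1)) <;>
      simp +contextual
  simp only [this]
  omega

/-- The three families, indexed by column numbers. -/
def FM (e : ℕ) (YN ZN : Finset ℕ) (u : Fin 6) : ℕ ⊕ (ℕ ⊕ ℕ × ℕ) → Fin 3 → Fin e → Bool
  | Sum.inl n => fun s c => if c.val = n then aacol u s else if c.val ∈ YN then ycol u s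
      else if c.val ∈ ZN then zcol u s else false
  | Sum.inr (Sum.inl n) => fun s c => if c.val = n then abcol u s else if c.val ∈ ZN then zcol u s
      else if c.val ∈ YN then ycol u s else false
  | Sum.inr (Sum.inr (n, m)) => fun s c => if c.val = n then oycol u s
      else if c.val = m then ozcol u s
      else if c.val ∈ YN then ycol u s else if c.val ∈ ZN then zcol u s else false


section main
variable {e : ℕ} {YN ZN : Finset ℕ} (u : Fin 6)

theorem cols_ne (u : Fin 6) : aacol u ≠ ycol u ∧ oycol u ≠ ycol u ∧ aacol u ≠ oycol u ∧
    abcol u ≠ zcol u ∧ ozcol u ≠ zcol u ∧ abcol u ≠ ozcol u := by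
  revert u; decide

def cY (u : Fin 6) (n : ℕ) : ℕ ⊕ (ℕ ⊕ ℕ × ℕ) → Fin 3 → Bool
  | Sum.inl k => if n = k then aacol u else ycol u
  | Sum.inr (Sum.inl _) => ycol u
  | Sum.inr (Sum.inr (k, _)) => if n = k then oycol u else ycol u

def cZ (u : Fin 6) (n : ℕ) : ℕ ⊕ (ℕ ⊕ ℕ × ℕ) → Fin 3 → Bool
  | Sum.inl _ => zcol u
  | Sum.inr (Sum.inl l) => if n = l then abcol u else zcol u
  | Sum.inr (Sum.inr (_, l)) => if n = l then ozcol u else zcol u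

/-- The index set. -/
def II (YN ZN : Finset ℕ) : Finset (ℕ ⊕ (ℕ ⊕ ℕ × ℕ)) := YN.disjSum (ZN.disjSum (YN ×ˢ ZN))

theorem mII1 (n : ℕ) : Sum.inl n ∈ II YN ZN ↔ n ∈ YN := by simp [II]
theorem mII2 (n : ℕ) : Sum.inr (Sum.inl n) ∈ II YN ZN ↔ n ∈ ZN := by simp [II]
theorem mII3 (n m : ℕ) : Sum.inr (Sum.inr (n, m)) ∈ II YN ZN ↔ n ∈ YN ∧ m ∈ ZN := by simp [II]

theorem FM_cY (hYZ : ∀ x, x ∈ YN → x ∉ ZN) (i : ℕ ⊕ (ℕ ⊕ ℕ × ℕ)) (hi : i ∈ II YN ZN)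
    (n : ℕ) (hn : n < e) (hy : n ∈ YN) :
    (fun s => FM e YN ZN u i s ⟨n, hn⟩) = cY u n i := by
  funext s
  rcases i with k | k | ⟨k, m⟩
  · rw [mII1] at hi; simp only [FM, cY]; grind
  · rw [mII2] at hi; simp only [FM, cY]; grind
  · rw [mII3] at hi; simp only [FM, cY]; grind

theorem FM_cZ (hYZ : ∀ x, x ∈ YN → x ∉ ZN) (i : ℕ ⊕ (ℕ ⊕ ℕ × ℕ)) (hi : i ∈ II YN ZN)
    (n : ℕ) (hn : n < e) (hy : n ∈ ZN) :
    (fun s => FM e YN ZN u i s ⟨n, hn⟩) = cZ u n i := by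
  funext s
  rcases i with k | k | ⟨k, m⟩
  · rw [mII1] at hi; simp only [FM, cZ]; grind
  · rw [mII2] at hi; simp only [FM, cZ]; grind
  · rw [mII3] at hi; simp only [FM, cZ]; grind

theorem FM_inj (hYe : ∀ x ∈ YN, x < e) (hZe : ∀ x ∈ ZN, x < e) (hYZ : ∀ x, x ∈ YN → x ∉ ZN) :
    Set.InjOn (FM e YN ZN u) (II YN ZN) := by
  obtain ⟨c1, c2, c3, c4, c5, c6⟩ := cols_ne u
  intro i hi j hj h
  rw [Finset.mem_coe] at hi hj
  have hy : ∀ n ∈ YN, cY u n i = cY u n j := fun n hn => by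
    rw [← FM_cY (e := e) u hYZ i hi n (hYe n hn) hn, ← FM_cY u hYZ j hj n (hYe n hn) hn, h]
  have hz : ∀ n ∈ ZN, cZ u n i = cZ u n j := fun n hn => by
    rw [← FM_cZ (e := e) u hYZ i hi n (hZe n hn) hn, ← FM_cZ u hYZ j hj n (hZe n hn) hn, h]
  clear h
  rcases i with n | n | ⟨n, m⟩ <;> rcases j with n' | n' | ⟨n', m'⟩ <;>
    simp only [mII1, mII2, mII3, cY, cZ] at hi hj hy hz <;>
    grind

theorem II_card : (II YN ZN).card = YN.card + (ZN.card + YN.card * ZN.card) := by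
  simp [II]

theorem II_filter (p : ℕ ⊕ (ℕ ⊕ ℕ × ℕ) → Prop) :
    ((II YN ZN).filter p).card = cnt YN ZN (fun n => p (Sum.inl n)) (fun n => p (Sum.inr (Sum.inl n)))
      (fun n m => p (Sum.inr (Sum.inr (n, m)))) := by
  simp only [cnt, II, Finset.card_filter, Finset.sum_disjSum, Prod.mk.eta]
  omega

/-- The rows of the three families. -/
def rws (e : ℕ) (YN ZN : Finset ℕ) (u : Fin 6) (i : ℕ ⊕ (ℕ ⊕ ℕ × ℕ)) (s : Fin 3) : Finset ℕ :=
  row (FM e YN ZN u i) s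

theorem mem_rw1 (hYe : ∀ x ∈ YN, x < e) (hZe : ∀ x ∈ ZN, x < e) (hYZ : ∀ x, x ∈ YN → x ∉ ZN)
    (n : ℕ) (hn : n ∈ YN) (s : Fin 3) (x : ℕ) :
    x ∈ rws e YN ZN u (Sum.inl n) s ↔ (x = n ∧ aacol u s = true) ∨ (x ≠ n ∧ x ∈ YN ∧ ycol u s = true)
      ∨ (x ∈ ZN ∧ zcol u s = true) := by
  simp only [rws, mem_row, FM]
  grind

theorem mem_rw2 (hYe : ∀ x ∈ YN, x < e) (hZe : ∀ x ∈ ZN, x < e) (hYZ : ∀ x, x ∈ YN → x ∉ ZN)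
    (n : ℕ) (hn : n ∈ ZN) (s : Fin 3) (x : ℕ) :
    x ∈ rws e YN ZN u (Sum.inr (Sum.inl n)) s ↔ (x = n ∧ abcol u s = true) ∨ (x ∈ YN ∧ ycol u s = true)
      ∨ (x ≠ n ∧ x ∈ ZN ∧ zcol u s = true) := by
  simp only [rws, mem_row, FM]
  grind

theorem mem_rw3 (hYe : ∀ x ∈ YN, x < e) (hZe : ∀ x ∈ ZN, x < e) (hYZ : ∀ x, x ∈ YN → x ∉ ZN)
    (n m : ℕ) (hn : n ∈ YN) (hm : m ∈ ZN) (s : Fin 3) (x : ℕ) :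
    x ∈ rws e YN ZN u (Sum.inr (Sum.inr (n, m))) s ↔ (x = n ∧ oycol u s = true) ∨
      (x = m ∧ ozcol u s = true) ∨ (x ≠ n ∧ x ∈ YN ∧ ycol u s = true)
      ∨ (x ≠ m ∧ x ∈ ZN ∧ zcol u s = true) := by
  simp only [rws, mem_row, FM]
  grind (splits := 30)

theorem count_u (hYe : ∀ x ∈ YN, x < e) (hZe : ∀ x ∈ ZN, x < e) (hYZ : ∀ x, x ∈ YN → x ∉ ZN)
    (hY : YN.Nonempty) (hZ : ZN.Nonempty) :
    ((II YN ZN).filter (fun i => KK (rws e YN ZN u i 0) (rws e YN ZN u i 1) (rws e YN ZN u i 2))).card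
      = YN.card * ZN.card := by
  rw [II_filter]
  have hZY : ∀ x, x ∈ ZN → x ∉ YN := fun x h h' => hYZ x h' h
  have m1 := mem_rw1 u hYe hZe hYZ
  have m2 := mem_rw2 u hYe hZe hYZ
  have m3 := mem_rw3 u hYe hZe hYZ
  obtain rfl | rfl | rfl | rfl | rfl | rfl : u = 0 ∨ u = 1 ∨ u = 2 ∨ u = 3 ∨ u = 4 ∨ u = 5 := by
    omega
  · refine tot1 (α := ℕ) (A := YN) (B := ZN) KP_nat hYZ hY hZ
      (fun k : ℕ => rws e YN ZN 0 (Sum.inl k) 0) (fun k : ℕ => rws e YN ZN 0 (Sum.inl k) 1) (fun k : ℕ => rws e YN ZN 0 (Sum.inl k) 2)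
      (fun k : ℕ => rws e YN ZN 0 (Sum.inr (Sum.inl k)) 0) (fun k : ℕ => rws e YN ZN 0 (Sum.inr (Sum.inl k)) 1) (fun k : ℕ => rws e YN ZN 0 (Sum.inr (Sum.inl k)) 2)
      (fun k l : ℕ => rws e YN ZN 0 (Sum.inr (Sum.inr (k, l))) 0)
      (fun k l : ℕ => rws e YN ZN 0 (Sum.inr (Sum.inr (k, l))) 1)
      (fun k l : ℕ => rws e YN ZN 0 (Sum.inr (Sum.inr (k, l))) 2) ?_ ?_ ?_
    · intro (k : ℕ) hk
      change F0 (α := ℕ) YN ZN k _ _ _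
      replace hk : k ∈ YN := hk
      refine ⟨?_, ?_, ?_⟩ <;> intro (x : ℕ) <;>
        refine (m1 k hk _ x).trans ?_ <;> simp [aacol, ycol, zcol] <;> grind
    · intro (k : ℕ) hk
      change F0 (α := ℕ) YN ZN k _ _ _
      replace hk : k ∈ ZN := hk
      refine ⟨?_, ?_, ?_⟩ <;> intro (x : ℕ) <;>
        refine (m2 k hk _ x).trans ?_ <;> simp [abcol, ycol, zcol] <;> grind
    · intro (k : ℕ) hk (l : ℕ) hl
      change F1 (α := ℕ) YN ZN k l _ _ _
      replace hk : k ∈ YN := hk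
      replace hl : l ∈ ZN := hl
      refine ⟨?_, ?_, ?_⟩ <;> intro (x : ℕ) <;>
        refine (m3 k l hk hl _ x).trans ?_ <;> simp [oycol, ozcol, ycol, zcol] <;> grind
  · rw [cnt_swap, mul_comm]
    refine tot4 (α := ℕᵒᵈ) (A := ZN) (B := YN) KP_dual hZY hZ hY
      (fun k : ℕ => rws e YN ZN 1 (Sum.inr (Sum.inl k)) 1) (fun k : ℕ => rws e YN ZN 1 (Sum.inr (Sum.inl k)) 2) (fun k : ℕ => rws e YN ZN 1 (Sum.inr (Sum.inl k)) 0)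
      (fun k : ℕ => rws e YN ZN 1 (Sum.inl k) 1) (fun k : ℕ => rws e YN ZN 1 (Sum.inl k) 2) (fun k : ℕ => rws e YN ZN 1 (Sum.inl k) 0)
      (fun k l : ℕ => rws e YN ZN 1 (Sum.inr (Sum.inr (l, k))) 1)
      (fun k l : ℕ => rws e YN ZN 1 (Sum.inr (Sum.inr (l, k))) 2)
      (fun k l : ℕ => rws e YN ZN 1 (Sum.inr (Sum.inr (l, k))) 0) ?_ ?_ ?_
    · intro (k : ℕ) hk
      change F0 (α := ℕ) ZN YN k _ _ _
      replace hk : k ∈ ZN := hk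
      refine ⟨?_, ?_, ?_⟩ <;> intro (x : ℕ) <;>
        refine (m2 k hk _ x).trans ?_ <;> simp [abcol, ycol, zcol] <;> grind
    · intro (k : ℕ) hk
      change F0 (α := ℕ) ZN YN k _ _ _
      replace hk : k ∈ YN := hk
      refine ⟨?_, ?_, ?_⟩ <;> intro (x : ℕ) <;>
        refine (m1 k hk _ x).trans ?_ <;> simp [aacol, ycol, zcol] <;> grind
    · intro (k : ℕ) hk (l : ℕ) hl
      change F1 (α := ℕ) ZN YN k l _ _ _
      replace hk : k ∈ ZN := hk
      replace hl : l ∈ YN := hl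
      refine ⟨?_, ?_, ?_⟩ <;> intro (x : ℕ) <;>
        refine (m3 l k hl hk _ x).trans ?_ <;> simp [oycol, ozcol, ycol, zcol] <;> grind
  · refine tot3 (α := ℕ) (A := YN) (B := ZN) KP_nat hYZ hY hZ
      (fun k : ℕ => rws e YN ZN 2 (Sum.inl k) 2) (fun k : ℕ => rws e YN ZN 2 (Sum.inl k) 0) (fun k : ℕ => rws e YN ZN 2 (Sum.inl k) 1)
      (fun k : ℕ => rws e YN ZN 2 (Sum.inr (Sum.inl k)) 2) (fun k : ℕ => rws e YN ZN 2 (Sum.inr (Sum.inl k)) 0) (fun k : ℕ => rws e YN ZN 2 (Sum.inr (Sum.inl k)) 1)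
      (fun k l : ℕ => rws e YN ZN 2 (Sum.inr (Sum.inr (k, l))) 2)
      (fun k l : ℕ => rws e YN ZN 2 (Sum.inr (Sum.inr (k, l))) 0)
      (fun k l : ℕ => rws e YN ZN 2 (Sum.inr (Sum.inr (k, l))) 1) ?_ ?_ ?_
    · intro (k : ℕ) hk
      change F0 (α := ℕ) YN ZN k _ _ _
      replace hk : k ∈ YN := hk
      refine ⟨?_, ?_, ?_⟩ <;> intro (x : ℕ) <;>
        refine (m1 k hk _ x).trans ?_ <;> simp [aacol, ycol, zcol] <;> grind
    · intro (k : ℕ) hk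
      change F0 (α := ℕ) YN ZN k _ _ _
      replace hk : k ∈ ZN := hk
      refine ⟨?_, ?_, ?_⟩ <;> intro (x : ℕ) <;>
        refine (m2 k hk _ x).trans ?_ <;> simp [abcol, ycol, zcol] <;> grind
    · intro (k : ℕ) hk (l : ℕ) hl
      change F1 (α := ℕ) YN ZN k l _ _ _
      replace hk : k ∈ YN := hk
      replace hl : l ∈ ZN := hl
      refine ⟨?_, ?_, ?_⟩ <;> intro (x : ℕ) <;>
        refine (m3 k l hk hl _ x).trans ?_ <;> simp [oycol, ozcol, ycol, zcol] <;> grind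
  · rw [cnt_swap, mul_comm]
    refine tot4 (α := ℕ) (A := ZN) (B := YN) KP_nat hZY hZ hY
      (fun k : ℕ => rws e YN ZN 3 (Sum.inr (Sum.inl k)) 1) (fun k : ℕ => rws e YN ZN 3 (Sum.inr (Sum.inl k)) 0) (fun k : ℕ => rws e YN ZN 3 (Sum.inr (Sum.inl k)) 2)
      (fun k : ℕ => rws e YN ZN 3 (Sum.inl k) 1) (fun k : ℕ => rws e YN ZN 3 (Sum.inl k) 0) (fun k : ℕ => rws e YN ZN 3 (Sum.inl k) 2)
      (fun k l : ℕ => rws e YN ZN 3 (Sum.inr (Sum.inr (l, k))) 1)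
      (fun k l : ℕ => rws e YN ZN 3 (Sum.inr (Sum.inr (l, k))) 0)
      (fun k l : ℕ => rws e YN ZN 3 (Sum.inr (Sum.inr (l, k))) 2) ?_ ?_ ?_
    · intro (k : ℕ) hk
      change F0 (α := ℕ) ZN YN k _ _ _
      replace hk : k ∈ ZN := hk
      refine ⟨?_, ?_, ?_⟩ <;> intro (x : ℕ) <;>
        refine (m2 k hk _ x).trans ?_ <;> simp [abcol, ycol, zcol] <;> grind
    · intro (k : ℕ) hk
      change F0 (α := ℕ) ZN YN k _ _ _
      replace hk : k ∈ YN := hk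
      refine ⟨?_, ?_, ?_⟩ <;> intro (x : ℕ) <;>
        refine (m1 k hk _ x).trans ?_ <;> simp [aacol, ycol, zcol] <;> grind
    · intro (k : ℕ) hk (l : ℕ) hl
      change F1 (α := ℕ) ZN YN k l _ _ _
      replace hk : k ∈ ZN := hk
      replace hl : l ∈ YN := hl
      refine ⟨?_, ?_, ?_⟩ <;> intro (x : ℕ) <;>
        refine (m3 l k hl hk _ x).trans ?_ <;> simp [oycol, ozcol, ycol, zcol] <;> grind
  · refine tot3 (α := ℕᵒᵈ) (A := YN) (B := ZN) KP_dual hYZ hY hZ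
      (fun k : ℕ => rws e YN ZN 4 (Sum.inl k) 0) (fun k : ℕ => rws e YN ZN 4 (Sum.inl k) 2) (fun k : ℕ => rws e YN ZN 4 (Sum.inl k) 1)
      (fun k : ℕ => rws e YN ZN 4 (Sum.inr (Sum.inl k)) 0) (fun k : ℕ => rws e YN ZN 4 (Sum.inr (Sum.inl k)) 2) (fun k : ℕ => rws e YN ZN 4 (Sum.inr (Sum.inl k)) 1)
      (fun k l : ℕ => rws e YN ZN 4 (Sum.inr (Sum.inr (k, l))) 0)
      (fun k l : ℕ => rws e YN ZN 4 (Sum.inr (Sum.inr (k, l))) 2)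
      (fun k l : ℕ => rws e YN ZN 4 (Sum.inr (Sum.inr (k, l))) 1) ?_ ?_ ?_
    · intro (k : ℕ) hk
      change F0 (α := ℕ) YN ZN k _ _ _
      replace hk : k ∈ YN := hk
      refine ⟨?_, ?_, ?_⟩ <;> intro (x : ℕ) <;>
        refine (m1 k hk _ x).trans ?_ <;> simp [aacol, ycol, zcol] <;> grind
    · intro (k : ℕ) hk
      change F0 (α := ℕ) YN ZN k _ _ _
      replace hk : k ∈ ZN := hk
      refine ⟨?_, ?_, ?_⟩ <;> intro (x : ℕ) <;>
        refine (m2 k hk _ x).trans ?_ <;> simp [abcol, ycol, zcol] <;> grind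
    · intro (k : ℕ) hk (l : ℕ) hl
      change F1 (α := ℕ) YN ZN k l _ _ _
      replace hk : k ∈ YN := hk
      replace hl : l ∈ ZN := hl
      refine ⟨?_, ?_, ?_⟩ <;> intro (x : ℕ) <;>
        refine (m3 k l hk hl _ x).trans ?_ <;> simp [oycol, ozcol, ycol, zcol] <;> grind
  · rw [cnt_swap, mul_comm]
    refine tot1 (α := ℕᵒᵈ) (A := ZN) (B := YN) KP_dual hZY hZ hY
      (fun k : ℕ => rws e YN ZN 5 (Sum.inr (Sum.inl k)) 2) (fun k : ℕ => rws e YN ZN 5 (Sum.inr (Sum.inl k)) 1) (fun k : ℕ => rws e YN ZN 5 (Sum.inr (Sum.inl k)) 0)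
      (fun k : ℕ => rws e YN ZN 5 (Sum.inl k) 2) (fun k : ℕ => rws e YN ZN 5 (Sum.inl k) 1) (fun k : ℕ => rws e YN ZN 5 (Sum.inl k) 0)
      (fun k l : ℕ => rws e YN ZN 5 (Sum.inr (Sum.inr (l, k))) 2)
      (fun k l : ℕ => rws e YN ZN 5 (Sum.inr (Sum.inr (l, k))) 1)
      (fun k l : ℕ => rws e YN ZN 5 (Sum.inr (Sum.inr (l, k))) 0) ?_ ?_ ?_
    · intro (k : ℕ) hk
      change F0 (α := ℕ) ZN YN k _ _ _
      replace hk : k ∈ ZN := hk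
      refine ⟨?_, ?_, ?_⟩ <;> intro (x : ℕ) <;>
        refine (m2 k hk _ x).trans ?_ <;> simp [abcol, ycol, zcol] <;> grind
    · intro (k : ℕ) hk
      change F0 (α := ℕ) ZN YN k _ _ _
      replace hk : k ∈ YN := hk
      refine ⟨?_, ?_, ?_⟩ <;> intro (x : ℕ) <;>
        refine (m1 k hk _ x).trans ?_ <;> simp [aacol, ycol, zcol] <;> grind
    · intro (k : ℕ) hk (l : ℕ) hl
      change F1 (α := ℕ) ZN YN k l _ _ _
      replace hk : k ∈ ZN := hk
      replace hl : l ∈ YN := hl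
      refine ⟨?_, ?_, ?_⟩ <;> intro (x : ℕ) <;>
        refine (m3 l k hl hk _ x).trans ?_ <;> simp [oycol, ozcol, ycol, zcol] <;> grind

end main

end

section

theorem mem_iv {e : ℕ} (Y : Finset (Fin e)) (c : Fin e) : c.val ∈ Y.image Fin.val ↔ c ∈ Y := by
  simp [Fin.val_inj]

theorem Duset_FM {e : ℕ} (Y Z : Finset (Fin e)) {y z : ℕ} (hY : Y.card = y + 1) (hZ : Z.card = z + 1)
    (u : Fin 6) : Duset Y Z hY hZ u =
      FM e (Y.image Fin.val) (Z.image Fin.val) u '' (II (Y.image Fin.val) (Z.image Fin.val)) := by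
  have ha : ∀ k, alphaM Y Z hY u k =
      FM e (Y.image Fin.val) (Z.image Fin.val) u (Sum.inl (Y.orderEmbOfFin hY k).val) := by
    intro k; funext s c
    simp only [alphaM, FM, mem_iv, Fin.val_inj]
  have hb : ∀ k, betaM Y Z hZ u k =
      FM e (Y.image Fin.val) (Z.image Fin.val) u (Sum.inr (Sum.inl (Z.orderEmbOfFin hZ k).val)) := by
    intro k; funext s c
    simp only [betaM, FM, mem_iv, Fin.val_inj]
  have hc : ∀ k l, gammaM Y Z hY hZ u k l =
      FM e (Y.image Fin.val) (Z.image Fin.val) u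
        (Sum.inr (Sum.inr ((Y.orderEmbOfFin hY k).val, (Z.orderEmbOfFin hZ l).val))) := by
    intro k l; funext s c
    simp only [gammaM, FM, mem_iv, Fin.val_inj]
  have sur : ∀ (W : Finset (Fin e)) (w : ℕ) (hW : W.card = w) (n : ℕ), n ∈ W.image Fin.val →
      ∃ k, (W.orderEmbOfFin hW k).val = n := by
    intro W w hW n hn
    obtain ⟨c, hc, rfl⟩ := Finset.mem_image.1 hn
    have : c ∈ Set.range (W.orderEmbOfFin hW) := by
      rw [Finset.range_orderEmbOfFin]; exact hc
    obtain ⟨k, rfl⟩ := this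
    exact ⟨k, rfl⟩
  ext M
  simp only [Duset, Set.mem_ofPred_eq, Set.mem_image, Finset.mem_coe]
  constructor
  · rintro (⟨k, rfl⟩ | ⟨l, rfl⟩ | ⟨k, l, rfl⟩)
    · exact ⟨_, (mII1 _).2 ((mem_iv _ _).2 (Finset.orderEmbOfFin_mem _ _ _)), (ha k).symm⟩
    · exact ⟨_, (mII2 _).2 ((mem_iv _ _).2 (Finset.orderEmbOfFin_mem _ _ _)), (hb l).symm⟩
    · exact ⟨_, (mII3 _ _).2 ⟨(mem_iv _ _).2 (Finset.orderEmbOfFin_mem _ _ _),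
        (mem_iv _ _).2 (Finset.orderEmbOfFin_mem _ _ _)⟩, (hc k l).symm⟩
  · rintro ⟨i, hi, rfl⟩
    rcases i with n | n | ⟨n, m⟩
    · obtain ⟨k, rfl⟩ := sur Y _ hY n ((mII1 _).1 hi)
      exact Or.inl ⟨k, (ha k).symm⟩
    · obtain ⟨k, rfl⟩ := sur Z _ hZ n ((mII2 _).1 hi)
      exact Or.inr (Or.inl ⟨k, (hb k).symm⟩)
    · obtain ⟨k, rfl⟩ := sur Y _ hY n ((mII3 _ _).1 hi).1
      obtain ⟨l, rfl⟩ := sur Z _ hZ m ((mII3 _ _).1 hi).2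
      exact Or.inr (Or.inr ⟨k, l, (hc k l).symm⟩)

end

/-- `|D^u| = (y+2)(z+2) − 1`, and `D^u` contains exactly
`(y+1)(z+1)` Kleshchev multipartitions. -/
theorem Duset_counts (e : ℕ) (he : 2 ≤ e)
    (X Y Z : Finset (Fin e)) {y z : ℕ} (hY : Y.card = y + 1) (hZ : Z.card = z + 1)
    (hXY : Disjoint X Y) (hXZ : Disjoint X Z) (hYZ : Disjoint Y Z)
    (hcover : X ∪ Y ∪ Z = Finset.univ) (u : Fin 6) :
    Set.ncard (Duset Y Z hY hZ u) = (y + 2) * (z + 2) - 1 ∧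
    Set.ncard {M ∈ Duset Y Z hY hZ u |
      IsKleshchev (PtCharge (fun _ => 0) M) (PtPart (fun _ => 0) M)} =
        (y + 1) * (z + 1) := by
  rw [Duset_FM]
  have bd : ∀ (W : Finset (Fin e)), ∀ x ∈ W.image Fin.val, x < e := by
    intro W x hx
    obtain ⟨c, -, rfl⟩ := Finset.mem_image.1 hx
    exact c.2
  have dj : ∀ x, x ∈ Y.image Fin.val → x ∉ Z.image Fin.val := by
    intro x hx
    obtain ⟨c, hc, rfl⟩ := Finset.mem_image.1 hx
    rw [mem_iv]
    exact Finset.disjoint_left.1 hYZ hc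
  have cY' : (Y.image Fin.val).card = y + 1 := by
    rw [Finset.card_image_of_injective _ Fin.val_injective, hY]
  have cZ' : (Z.image Fin.val).card = z + 1 := by
    rw [Finset.card_image_of_injective _ Fin.val_injective, hZ]
  have neY : (Y.image Fin.val).Nonempty := Finset.card_pos.1 (by omega)
  have neZ : (Z.image Fin.val).Nonempty := Finset.card_pos.1 (by omega)
  have inj := FM_inj u (bd Y) (bd Z) dj
  constructor
  · rw [Set.InjOn.ncard_image inj, Set.ncard_coe_finset, II_card, cY', cZ']
    have : (y + 2) * (z + 2) = (y + 1 + (z + 1 + (y + 1) * (z + 1))) + 1 := by ring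
    omega
  · have key := count_u u (bd Y) (bd Z) dj neY neZ
    rw [cY', cZ'] at key
    rw [← key, ← Set.ncard_coe_finset]
    have : {M ∈ FM e (Y.image Fin.val) (Z.image Fin.val) u ''
          (II (Y.image Fin.val) (Z.image Fin.val)) |
        IsKleshchev (PtCharge (fun _ => 0) M) (PtPart (fun _ => 0) M)} =
        FM e (Y.image Fin.val) (Z.image Fin.val) u ''
          ((II (Y.image Fin.val) (Z.image Fin.val)).filter (fun i =>
            KK (rws e (Y.image Fin.val) (Z.image Fin.val) u i 0)
              (rws e (Y.image Fin.val) (Z.image Fin.val) u i 1)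
              (rws e (Y.image Fin.val) (Z.image Fin.val) u i 2)) : Finset _) := by
      ext M
      simp only [Set.mem_ofPred_eq, Set.mem_image, Finset.mem_coe, Finset.mem_filter]
      constructor
      · rintro ⟨⟨i, hi, rfl⟩, h⟩
        exact ⟨i, ⟨hi, (IsK_iff _).1 h⟩, rfl⟩
      · rintro ⟨i, ⟨hi, h⟩, rfl⟩
        exact ⟨⟨i, hi, rfl⟩, (IsK_iff _).2 h⟩
    rw [this]
    refine Set.InjOn.ncard_image (inj.mono ?_)
    intro i hi
    exact (Finset.mem_filter.1 (Finset.mem_coe.1 hi)).1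

end
end AK
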